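/- Let G be a finite simple graph with chromatic number χ(G) ≥ 2, and let t be the unique integer with 2ᵗ < χ(G) ≤ 2^{t+1}. Suppose there is a set F of edges of G forming a forest such that the graph obtained from G by deleting the edges in F has chromatic number at most 2ᵗ. Then there exists an integer ℓ with 0 ≤ ℓ < 2^{|F|−1} such that for all sufficiently large n, ex({M(G)}, n) = 2ⁿ(1 − 2^{−t}) + ℓ. -/

import Mathlib

open scoped Classical

/-- `M` has an `N`-restriction: some injective linear image of `N` lies inside `M`. -/
def HasRestriction {α β : Type*} [AddCommMonoid α] [AddCommMonoid β]
    [Module (ZMod 2) α] [Module (ZMod 2) β] (N : Set α) (M : Set β) : Prop :=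
  ∃ ψ : α →ₗ[ZMod 2] β, Function.Injective ψ ∧ ψ '' N ⊆ M

/-- The set of distinct `N`-restrictions of `M` (as subsets of `M`). -/
def restrictionSet {α β : Type*} [AddCommMonoid α] [AddCommMonoid β]
    [Module (ZMod 2) α] [Module (ZMod 2) β] (N : Set α) (M : Set β) : Set (Set β) :=
  {S | S ⊆ M ∧ ∃ ψ : α →ₗ[ZMod 2] β, Function.Injective ψ ∧ S = ψ '' N}

/-- The Turán number for a single excluded matroid `N`. -/
noncomputable def exNum {α : Type*} [AddCommMonoid α] [Module (ZMod 2) α] (N : Set α) (n : ℕ) : ℕ :=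
  sSup {m | ∃ M : Set (Fin n → ZMod 2), 0 ∉ M ∧ ¬ HasRestriction N M ∧ M.ncard = m}

/-- The Turán number for a family of excluded matroids. -/
noncomputable def exNumFam (𝒩 : Set (Σ k : ℕ, Set (Fin k → ZMod 2))) (n : ℕ) : ℕ :=
  sSup {m | ∃ M : Set (Fin n → ZMod 2), 0 ∉ M ∧
    (∀ N ∈ 𝒩, ¬ HasRestriction N.2 M) ∧ M.ncard = m}

/-- The critical number of `M ⊆ 𝔽₂ⁿ`. -/
noncomputable def critNum {n : ℕ} (M : Set (Fin n → ZMod 2)) : ℕ :=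
  sInf {c | ∃ φ : (Fin n → ZMod 2) →ₗ[ZMod 2] (Fin c → ZMod 2), ∀ x ∈ M, φ x ≠ 0}

/-- The rank of `M`: dimension of its span. -/
noncomputable def rankM {n : ℕ} (M : Set (Fin n → ZMod 2)) : ℕ :=
  Module.finrank (ZMod 2) (Submodule.span (ZMod 2) M)

/-- `M` is a copy of `N^{n,t}`. -/
def IsCopyNnt {d : ℕ} (N : Set (Fin d → ZMod 2)) (n t : ℕ)
    (M : Set (Fin n → ZMod 2)) : Prop :=
  ∃ F : Submodule (ZMod 2) (Fin n → ZMod 2), Module.finrank (ZMod 2) F = n - t ∧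
    ∃ θ : (Fin d → ZMod 2) →ₗ[ZMod 2] (Fin n → ZMod 2),
      Function.Injective θ ∧ (∀ x, θ x ∈ F) ∧ M = θ '' N ∪ {x | x ∉ F}

/-- The decomposition family `𝒟(𝒩)`. -/
def decompFam (𝒩 : Set (Σ k : ℕ, Set (Fin k → ZMod 2))) (k : ℕ) :
    Set (Σ k : ℕ, Set (Fin k → ZMod 2)) :=
  {D | 0 ∉ D.2 ∧
    (∃ N ∈ 𝒩, ∃ M : Set (Fin N.1 → ZMod 2), IsCopyNnt D.2 N.1 k M ∧ HasRestriction N.2 M) ∧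
    ∀ D' : Σ k : ℕ, Set (Fin k → ZMod 2), 0 ∉ D'.2 →
      (∃ N ∈ 𝒩, ∃ M : Set (Fin N.1 → ZMod 2), IsCopyNnt D'.2 N.1 k M ∧ HasRestriction N.2 M) →
      HasRestriction D'.2 D.2 → HasRestriction D.2 D'.2}

/-- The cycle matroid of a simple graph. -/
def cycleMatroid {V : Type*} [DecidableEq V] (G : SimpleGraph V) : Set (V → ZMod 2) :=
  {x | ∃ u v, G.Adj u v ∧ x = Pi.single u 1 + Pi.single v 1}

abbrev Vec (n : ℕ) := Fin n → ZMod 2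

theorem card_Vec (n : ℕ) : Fintype.card (Vec n) = 2 ^ n := by
  simp [Vec, ZMod.card]

theorem z2_cases (c : ZMod 2) : c = 0 ∨ c = 1 := by
  revert c; decide

theorem z2_add_self {X : Type*} [AddCommGroup X] [Module (ZMod 2) X] (x : X) : x + x = 0 := by
  have h : ((1 : ZMod 2) + 1) • x = x + x := by rw [add_smul, one_smul]
  rw [← h, show (1 : ZMod 2) + 1 = 0 by decide, zero_smul]

theorem z2_add_add {X : Type*} [AddCommGroup X] [Module (ZMod 2) X] (x y : X) :
    x + y + y = x := by
  rw [add_assoc, z2_add_self, add_zero]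

theorem z2_eq_of_add {X : Type*} [AddCommGroup X] [Module (ZMod 2) X] {x y : X}
    (h : x + y = 0) : x = y := by
  have := z2_add_add x y
  rw [h, zero_add] at this
  exact this.symm

theorem exists_dual_one {E : Type*} [AddCommGroup E] [Module (ZMod 2) E] {a : E} (ha : a ≠ 0) :
    ∃ f : E →ₗ[ZMod 2] ZMod 2, f a = 1 := by
  by_contra hcon
  push Not at hcon
  exact ha ((Module.forall_dual_apply_eq_zero_iff (ZMod 2) a).1
    fun f => (z2_cases (f a)).resolve_right (hcon f))

/-- random linear maps: union bound -/
theorem union_bound {E K ι : Type*} [AddCommGroup E] [Module (ZMod 2) E] [Finite E]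
    [AddCommGroup K] [Module (ZMod 2) K] [Fintype K]
    (s : Finset ι) (a : ι → E) (B : ι → Finset K) (ha : ∀ i ∈ s, a i ≠ 0)
    (h : ∑ i ∈ s, (B i).card < Fintype.card K) :
    ∃ r : E →ₗ[ZMod 2] K, ∀ i ∈ s, r (a i) ∉ B i := by
  classical
  by_contra hcon
  push Not at hcon
  have : Finite (E →ₗ[ZMod 2] K) := Finite.of_injective (fun r => (r : E → K)) DFunLike.coe_injective
  have := Fintype.ofFinite (E →ₗ[ZMod 2] K)
  have key : ∀ i ∈ s, Fintype.card K * (Finset.univ.filter fun r : E →ₗ[ZMod 2] K => r (a i) ∈ B i).card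
      = (B i).card * Fintype.card (E →ₗ[ZMod 2] K) := by
    intro i hi
    obtain ⟨f, hf⟩ := exists_dual_one (ha i hi)
    have h1 : ∀ k : K, (Finset.univ.filter fun r : E →ₗ[ZMod 2] K => r (a i) + k ∈ B i).card
        = (Finset.univ.filter fun r : E →ₗ[ZMod 2] K => r (a i) ∈ B i).card := by
      intro k
      apply Finset.card_equiv (Equiv.addRight (f.smulRight k))
      intro r
      simp [hf]
    have h2 : ∑ k : K, (Finset.univ.filter fun r : E →ₗ[ZMod 2] K => r (a i) + k ∈ B i).card
        = ∑ r : E →ₗ[ZMod 2] K, (Finset.univ.filter fun k : K => r (a i) + k ∈ B i).card := by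
      simp only [Finset.card_filter]
      exact Finset.sum_comm
    have h3 : ∀ r : E →ₗ[ZMod 2] K, (Finset.univ.filter fun k : K => r (a i) + k ∈ B i).card = (B i).card := by
      intro r
      apply Finset.card_equiv (Equiv.addLeft (r (a i)))
      intro k
      simp
    simp only [h1, h3, Finset.sum_const, Finset.card_univ, smul_eq_mul] at h2
    rw [h2, mul_comm]
  have h4 : Fintype.card (E →ₗ[ZMod 2] K)
      ≤ ∑ i ∈ s, (Finset.univ.filter fun r : E →ₗ[ZMod 2] K => r (a i) ∈ B i).card := by
    refine le_trans ?_ Finset.card_biUnion_le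
    rw [← Finset.card_univ]
    apply Finset.card_le_card
    intro r _
    obtain ⟨i, hi, hr⟩ := hcon r
    simp only [Finset.mem_biUnion, Finset.mem_filter, Finset.mem_univ, true_and]
    exact ⟨i, hi, hr⟩
  have h5 := Nat.mul_le_mul_left (Fintype.card K) h4
  rw [Finset.mul_sum, Finset.sum_congr rfl key, ← Finset.sum_mul] at h5
  have h6 : 0 < Fintype.card (E →ₗ[ZMod 2] K) := Fintype.card_pos
  have := Nat.le_of_mul_le_mul_right h5 h6
  omega

/-- extend a linear map on `Fin m` by one vector -/
def extL {X : Type*} [AddCommGroup X] [Module (ZMod 2) X] {m : ℕ} (L : Vec m →ₗ[ZMod 2] X) (d : X) :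
    Vec (m + 1) →ₗ[ZMod 2] X :=
  (LinearMap.proj 0 : Vec (m+1) →ₗ[ZMod 2] ZMod 2).smulRight d +
    L ∘ₗ (LinearMap.funLeft (ZMod 2) (ZMod 2) Fin.succ)

theorem extL_apply {X : Type*} [AddCommGroup X] [Module (ZMod 2) X] {m : ℕ}
    (L : Vec m →ₗ[ZMod 2] X) (d : X) (w : Vec (m + 1)) :
    extL L d w = w 0 • d + L (fun i => w i.succ) := rfl

theorem tail_ne {m : ℕ} {w : Vec (m + 1)} (h : w ≠ 0) (h0 : w 0 = 0) :
    (fun i : Fin m => w i.succ) ≠ 0 := by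
  intro h1
  apply h
  funext i
  refine Fin.cases h0 (fun j => ?_) i
  exact congrFun h1 j

theorem cube_lemma (m : ℕ) : ∀ ε : ℝ, 0 < ε → ∃ ε' : ℝ, 0 < ε' ∧ ∃ n₀ : ℕ, ∀ n ≥ n₀,
    ∀ A : Finset (Vec n), ε * 2 ^ n ≤ (A.card : ℝ) →
    ∃ L : Vec m →ₗ[ZMod 2] Vec n, (∀ w, L w = 0 → w = 0) ∧
      ε' * 2 ^ n ≤ ((Finset.univ.filter fun k : Vec n => ∀ w, k + L w ∈ A).card : ℝ) := by
  induction m with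
  | zero =>
    intro ε hε
    refine ⟨ε, hε, 0, fun n _ A hA => ⟨0, fun w _ => Subsingleton.elim _ _, ?_⟩⟩
    simpa using hA
  | succ m ih =>
    intro ε hε
    obtain ⟨ε', hε', n₀, h⟩ := ih ε hε
    obtain ⟨n₁, hn₁⟩ := pow_unbounded_of_one_lt (2 ^ m * 2 / ε' ^ 2) (one_lt_two (α := ℝ))
    refine ⟨ε' ^ 2 / 2, by positivity, max n₀ n₁, fun n hn A hA => ?_⟩
    obtain ⟨L, hL, hcard⟩ := h n (le_trans (le_max_left _ _) hn) A hA
    set A' := Finset.univ.filter fun k : Vec n => ∀ w, k + L w ∈ A with hA'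
    have hN : (2 : ℝ) ^ m * 2 ≤ ε' ^ 2 * 2 ^ n := by
      have h1 : (2 : ℝ) ^ n₁ ≤ 2 ^ n :=
        pow_le_pow_right₀ one_le_two (le_trans (le_max_right _ _) hn)
      have h2 := lt_of_lt_of_le hn₁ h1
      rw [div_lt_iff₀ (by positivity)] at h2
      linarith
    -- find d
    have hd : ∃ d : Vec n, d ∉ Finset.univ.image L ∧
        ε' ^ 2 / 2 * 2 ^ n ≤ ((A'.filter fun k => k + d ∈ A').card : ℝ) := by
      by_contra hcon
      push Not at hcon
      have hsum : ∑ d : Vec n, ((A'.filter fun k => k + d ∈ A').card : ℝ) = (A'.card : ℝ) ^ 2 := by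
        have : ∑ d : Vec n, (A'.filter fun k => k + d ∈ A').card = A'.card ^ 2 := by
          simp only [Finset.card_filter]
          rw [Finset.sum_comm]
          have : ∀ k ∈ A', ∑ d : Vec n, (if k + d ∈ A' then 1 else 0) = A'.card := by
            intro k _
            rw [← Finset.card_filter]
            apply Finset.card_equiv (Equiv.addLeft k)
            intro d; simp
          rw [Finset.sum_congr rfl this]
          simp [sq]
        exact_mod_cast this
      have hle : ∀ d : Vec n, ((A'.filter fun k => k + d ∈ A').card : ℝ) ≤ A'.card := by
        intro d
        exact_mod_cast Finset.card_le_card (Finset.filter_subset _ _)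
      rw [← Finset.sum_add_sum_compl (Finset.univ.image L)] at hsum
      have h1 : ∑ d ∈ Finset.univ.image L, ((A'.filter fun k => k + d ∈ A').card : ℝ)
          ≤ 2 ^ m * A'.card := by
        refine le_trans (Finset.sum_le_sum fun d _ => hle d) ?_
        rw [Finset.sum_const, nsmul_eq_mul]
        gcongr
        have : (Finset.univ.image L).card ≤ 2 ^ m := by
          refine le_trans Finset.card_image_le ?_
          rw [Finset.card_univ, card_Vec]
        exact_mod_cast this
      have h2 : ∑ d ∈ (Finset.univ.image L)ᶜ, ((A'.filter fun k => k + d ∈ A').card : ℝ)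
          ≤ 2 ^ n * (ε' ^ 2 / 2 * 2 ^ n) := by
        refine le_trans (Finset.sum_le_sum fun d hd => (hcon d (by simpa using hd)).le) ?_
        rw [Finset.sum_const, nsmul_eq_mul]
        gcongr
        have : ((Finset.univ.image L)ᶜ).card ≤ 2 ^ n := by
          refine le_trans (Finset.card_le_univ _) ?_
          rw [card_Vec]
        exact_mod_cast this
      have hApos : (0:ℝ) < A'.card := lt_of_lt_of_le (by positivity) hcard
      have hA1 : (A'.card : ℝ) ≤ 2 ^ n := by
        have := Finset.card_le_univ A'
        rw [card_Vec] at this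
        exact_mod_cast this
      -- strictness
      have h3 : 2 ^ n * (ε' ^ 2 / 2 * 2 ^ n) ≤ (A'.card : ℝ) ^ 2 / 2 := by
        have : (ε' * 2 ^ n) ^ 2 ≤ (A'.card : ℝ) ^ 2 := by gcongr
        nlinarith
      have hε1 : ε' ≤ 1 := by
        by_contra hlt
        push Not at hlt
        have : (2:ℝ) ^ n < ε' * 2 ^ n := lt_mul_of_one_lt_left (by positivity) hlt
        linarith
      have h4 : (2:ℝ) ^ m * A'.card ≤ (A'.card : ℝ) ^ 2 / 2 := by
        have : (2:ℝ) ^ m * 2 ≤ A'.card := by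
          refine le_trans hN (le_trans ?_ hcard)
          gcongr
          nlinarith
        nlinarith
      -- need strict: use d = outside nonempty or all
      by_cases hne : ((Finset.univ.image L)ᶜ).Nonempty
      · have h2' : ∑ d ∈ (Finset.univ.image L)ᶜ, ((A'.filter fun k => k + d ∈ A').card : ℝ)
            < 2 ^ n * (ε' ^ 2 / 2 * 2 ^ n) := by
          refine lt_of_lt_of_le (Finset.sum_lt_sum_of_nonempty hne
            fun d hd => (hcon d (by simpa using hd))) ?_
          rw [Finset.sum_const, nsmul_eq_mul]
          gcongr
          have : ((Finset.univ.image L)ᶜ).card ≤ 2 ^ n := by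
            refine le_trans (Finset.card_le_univ _) ?_
            rw [card_Vec]
          exact_mod_cast this
        linarith
      · rw [Finset.not_nonempty_iff_eq_empty] at hne
        rw [hne, Finset.sum_empty] at hsum
        nlinarith
    obtain ⟨d, hd1, hd2⟩ := hd
    refine ⟨extL L d, ?_, le_trans hd2 ?_⟩
    · intro w hw
      rw [extL_apply] at hw
      by_contra hne
      rcases z2_cases (w 0) with h0 | h0
      · rw [h0, zero_smul, zero_add] at hw
        exact tail_ne hne h0 (hL _ hw)
      · rw [h0, one_smul] at hw
        apply hd1
        rw [z2_eq_of_add hw]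
        exact Finset.mem_image_of_mem _ (Finset.mem_univ _)
    · have : (A'.filter fun k => k + d ∈ A').card ≤
          (Finset.univ.filter fun k : Vec n => ∀ w, k + extL L d w ∈ A).card := by
        apply Finset.card_le_card
        intro k hk
        simp only [hA', Finset.mem_filter, Finset.mem_univ, true_and] at hk ⊢
        intro w
        rw [extL_apply]
        rcases z2_cases (w 0) with h0 | h0
        · rw [h0, zero_smul, zero_add]; exact hk.1 _
        · rw [h0, one_smul, ← add_assoc]; exact hk.2 _
      exact_mod_cast this

/-- Bose-Burton structure -/
def IsBB {X : Type*} [AddCommGroup X] [Module (ZMod 2) X] {t m : ℕ} (M : Finset X)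
    (φ : (Vec t × Vec m) →ₗ[ZMod 2] X) : Prop :=
  (∀ w, φ (0, w) = 0 → w = 0) ∧ ∀ a w, a ≠ 0 → φ (a, w) ∈ M

def HasBB {X : Type*} [AddCommGroup X] [Module (ZMod 2) X] (t m : ℕ) (M : Finset X) : Prop :=
  ∃ φ : (Vec t × Vec m) →ₗ[ZMod 2] X, IsBB M φ

theorem map_prod_split {X : Type*} [AddCommGroup X] [Module (ZMod 2) X] {t m : ℕ}
    (φ : (Vec t × Vec m) →ₗ[ZMod 2] X) (a : Vec t) (k w : Vec m) :
    φ (a, k + w) = φ (a, w) + φ (0, k) := by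
  rw [← map_add]; simp [add_comm]

theorem q_lemma (t m : ℕ) (ε : ℝ) (hε : 0 < ε) : ∃ m₀ : ℕ, ∀ m₁ ≥ m₀,
    ∀ {X : Type} [AddCommGroup X] [Module (ZMod 2) X] (M : Finset X)
    (φ : (Vec t × Vec m₁) →ₗ[ZMod 2] X), IsBB M φ → ¬ HasBB (t + 1) m M → ∀ x : X,
    ((Finset.univ.filter fun k : Vec m₁ => ∀ b, x + φ (b, k) ∈ M).card : ℝ) < ε * 2 ^ m₁ := by
  obtain ⟨ε', hε', m₀, h⟩ := cube_lemma m ε hε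
  refine ⟨m₀, fun m₁ hm₁ X _ _ M φ hφ hno x => ?_⟩
  by_contra hcon
  push Not at hcon
  obtain ⟨L, hL, hc⟩ := h m₁ hm₁ _ hcon
  have hpos : 0 < (Finset.univ.filter fun k : Vec m₁ => ∀ w, k + L w ∈
      (Finset.univ.filter fun k : Vec m₁ => ∀ b, x + φ (b, k) ∈ M)).card := by
    have : (0:ℝ) < ε' * 2 ^ m₁ := by positivity
    exact_mod_cast lt_of_lt_of_le this hc
  obtain ⟨k, hk⟩ := Finset.card_pos.mp hpos
  simp only [Finset.mem_filter, Finset.mem_univ, true_and] at hk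
  apply hno
  let P : (Vec (t + 1) × Vec m) →ₗ[ZMod 2] X :=
    (extL (φ ∘ₗ LinearMap.inl _ _ _) (x + φ (0, k))).coprod (φ ∘ₗ LinearMap.inr _ _ _ ∘ₗ L)
  have hP : ∀ a w, P (a, w) = a 0 • (x + φ (0, k)) + φ (fun i => a i.succ, L w) := by
    intro a w
    simp only [P, LinearMap.coprod_apply, extL_apply, LinearMap.comp_apply, LinearMap.inl_apply,
      LinearMap.inr_apply]
    rw [add_assoc, ← map_add]; simp
  refine ⟨P, fun w hw => ?_, fun a w ha => ?_⟩
  · rw [hP] at hw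
    simp only [Pi.zero_apply, zero_smul, zero_add] at hw
    exact hL _ (hφ.1 _ hw)
  · rw [hP]
    rcases z2_cases (a 0) with h0 | h0
    · rw [h0, zero_smul, zero_add]
      exact hφ.2 _ _ (tail_ne ha h0)
    · rw [h0, one_smul]
      have := hk w (fun i => a i.succ)
      rw [map_prod_split] at this
      convert this using 1
      abel

theorem es_aux {X : Type} [AddCommGroup X] [Module (ZMod 2) X] [Fintype X] {t m₀ : ℕ} (ε : ℝ)
    (M : Finset X) (φ : (Vec t × Vec m₀) →ₗ[ZMod 2] X)
    (hM' : (1 - (1 / 2) ^ t + ε) * Fintype.card X ≤ (M.card : ℝ)) (k : Vec m₀) :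
    ε * 2 ^ t * Fintype.card X ≤
        ((Finset.univ.filter fun x : X => ∀ b, x + φ (b, k) ∈ M).card : ℝ) := by
  have ha : (Finset.univ.filter fun x : X => ¬ ∀ b, x + φ (b, k) ∈ M).card
      ≤ ∑ b : Vec t, (Mᶜ).card := by
    refine le_trans (Finset.card_le_card ?_) (le_trans
      (Finset.card_biUnion_le (s := Finset.univ)
        (t := fun b : Vec t => Finset.univ.filter fun x : X => x + φ (b, k) ∉ M))
      (Finset.sum_le_sum fun b _ => le_of_eq ?_))
    · intro x hx
      simpa using hx
    · apply Finset.card_equiv (Equiv.addRight (φ (b, k)))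
      intro x; simp
  have hb := Finset.card_filter_add_card_filter_not (s := Finset.univ)
    (fun x : X => ∀ b, x + φ (b, k) ∈ M)
  have hc := Finset.card_add_card_compl M
  rw [Finset.card_univ] at hb
  rw [Finset.sum_const, Finset.card_univ, card_Vec, smul_eq_mul] at ha
  have ha' : ((Finset.univ.filter fun x : X => ¬ ∀ b, x + φ (b, k) ∈ M).card : ℝ)
    ≤ 2 ^ t * ((Mᶜ).card : ℝ) := by exact_mod_cast ha
  have hb' : ((Finset.univ.filter fun x : X => ∀ b, x + φ (b, k) ∈ M).card : ℝ) +
    ((Finset.univ.filter fun x : X => ¬ ∀ b, x + φ (b, k) ∈ M).card : ℝ) = Fintype.card X := by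
    exact_mod_cast hb
  have hc' : (M.card : ℝ) + (Mᶜ).card = Fintype.card X := by exact_mod_cast hc
  have hd : ((Mᶜ).card : ℝ) ≤ ((1/2)^t - ε) * Fintype.card X := by linarith
  have he : 2 ^ t * ((Mᶜ).card : ℝ) ≤ 2 ^ t * (((1/2)^t - ε) * Fintype.card X) := by gcongr
  have hf : (2:ℝ) ^ t * (1/2)^t = 1 := by rw [← mul_pow]; norm_num
  have hg : (2:ℝ) ^ t * (((1/2)^t - ε) * Fintype.card X)
      = Fintype.card X - ε * 2 ^ t * Fintype.card X := by
    linear_combination (Fintype.card X : ℝ) * hf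
  linarith

theorem es_step (t m : ℕ) (ε : ℝ) (hε : 0 < ε) : ∃ m₀ : ℕ, 
    ∀ {X : Type} [AddCommGroup X] [Module (ZMod 2) X] [Fintype X] (M : Finset X),
    HasBB t m₀ M → (1 - (1 / 2) ^ t + ε) * Fintype.card X ≤ (M.card : ℝ) → HasBB (t + 1) m M := by
  obtain ⟨m₀, hq⟩ := q_lemma t m (ε * 2 ^ t) (by positivity)
  refine ⟨m₀, fun {X} _ _ _ M ⟨φ, hφ⟩ hM' => ?_⟩
  by_contra hno
  have h1 := hq m₀ le_rfl M φ hφ hno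
  have h2 : ∑ x : X, ((Finset.univ.filter fun k : Vec m₀ => ∀ b, x + φ (b, k) ∈ M).card : ℝ)
      < Fintype.card X * (ε * 2 ^ t * 2 ^ m₀) := by
    refine lt_of_lt_of_le (Finset.sum_lt_sum_of_nonempty Finset.univ_nonempty fun x _ => h1 x) ?_
    rw [Finset.sum_const, Finset.card_univ, nsmul_eq_mul]
  have h3 : ∑ x : X, ((Finset.univ.filter fun k : Vec m₀ => ∀ b, x + φ (b, k) ∈ M).card : ℝ)
      = ∑ k : Vec m₀, ((Finset.univ.filter fun x : X => ∀ b, x + φ (b, k) ∈ M).card : ℝ) := by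
    have : ∑ x : X, (Finset.univ.filter fun k : Vec m₀ => ∀ b, x + φ (b, k) ∈ M).card
      = ∑ k : Vec m₀, (Finset.univ.filter fun x : X => ∀ b, x + φ (b, k) ∈ M).card := by
      simp only [Finset.card_filter]; exact Finset.sum_comm
    exact_mod_cast this
  have h4 := es_aux ε M φ hM'
  have h5 : (2:ℝ) ^ m₀ * (ε * 2 ^ t * Fintype.card X) ≤
      ∑ k : Vec m₀, ((Finset.univ.filter fun x : X => ∀ b, x + φ (b, k) ∈ M).card : ℝ) := by
    refine le_trans (le_of_eq ?_) (Finset.sum_le_sum fun k _ => h4 k)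
    rw [Finset.sum_const, Finset.card_univ, nsmul_eq_mul, card_Vec]
    push_cast; rfl
  rw [h3] at h2
  linarith

theorem es_lemma (t : ℕ) : ∀ m : ℕ, ∀ ε : ℝ, 0 < ε → ∃ n₀ : ℕ, ∀ n ≥ n₀, ∀ M : Finset (Vec n),
    (1 - 2 * (1 / 2) ^ t + ε) * 2 ^ n ≤ (M.card : ℝ) → HasBB t m M := by
  induction t with
  | zero =>
    intro m ε hε
    refine ⟨m, fun n hn M _ => ?_⟩
    let j : Vec m →ₗ[ZMod 2] Vec n := Function.ExtendByZero.linearMap (ZMod 2) (Fin.castLE hn)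
    refine ⟨j ∘ₗ LinearMap.snd _ _ _, fun w hw => ?_, fun a w ha => absurd (Subsingleton.elim _ _) ha⟩
    funext i
    have := congrFun hw (Fin.castLE hn i)
    simpa [j, (Fin.castLE_injective hn).extend_apply] using this
  | succ t ih =>
    intro m ε hε
    obtain ⟨m₀, hq⟩ := es_step t m ε hε
    obtain ⟨n₀, hn₀⟩ := ih m₀ ε hε
    refine ⟨n₀, fun n hn M hM => ?_⟩
    have hM' : (1 - (1 / 2) ^ t + ε) * 2 ^ n ≤ (M.card : ℝ) := by
      rw [pow_succ] at hM; convert hM using 3; ring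
    have hpt : (0:ℝ) < (1/2)^t := by positivity
    refine hq M (hn₀ n hn M (le_trans (by gcongr; linarith) hM')) ?_
    rw [card_Vec]
    exact_mod_cast hM'
section stab
variable {X : Type} [AddCommGroup X] [Module (ZMod 2) X] {t m₁ : ℕ}

noncomputable def cnt (M : Finset X) (φ : (Vec t × Vec m₁) →ₗ[ZMod 2] X) (y : X) : ℕ :=
  (Finset.univ.filter fun k : Vec m₁ => y + φ (0, k) ∉ M).card

noncomputable def gsum (M : Finset X) (φ : (Vec t × Vec m₁) →ₗ[ZMod 2] X) (x : X) : ℕ :=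
  ∑ b : Vec t, cnt M φ (x + φ (b, 0))

theorem cnt_eq (M : Finset X) (φ : (Vec t × Vec m₁) →ₗ[ZMod 2] X) (x : X) (b : Vec t) (c : Vec m₁) :
    (Finset.univ.filter fun k : Vec m₁ => x + φ (b, k + c) ∉ M).card = cnt M φ (x + φ (b, 0)) := by
  unfold cnt
  apply Finset.card_equiv (Equiv.addRight c)
  intro k
  simp only [Finset.mem_filter, Finset.mem_univ, true_and, Equiv.coe_addRight]
  rw [add_assoc, ← map_add]; simp

theorem cnt_shift (M : Finset X) (φ : (Vec t × Vec m₁) →ₗ[ZMod 2] X) (y : X) (k : Vec m₁) :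
    cnt M φ (y + φ (0, k)) = cnt M φ y := by
  unfold cnt
  apply Finset.card_equiv (Equiv.addLeft k)
  intro k'
  simp only [Finset.mem_filter, Finset.mem_univ, true_and, Equiv.coe_addLeft]
  rw [add_assoc, ← map_add]; simp

theorem gsum_shift (M : Finset X) (φ : (Vec t × Vec m₁) →ₗ[ZMod 2] X) (x : X) (b : Vec t) (k : Vec m₁) :
    gsum M φ (x + φ (b, k)) = gsum M φ x := by
  unfold gsum
  apply Fintype.sum_equiv (Equiv.addLeft b)
  intro b'
  rw [← cnt_shift M φ (x + φ (Equiv.addLeft b b', 0)) k]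
  congr 1
  rw [add_assoc, add_assoc, ← map_add, ← map_add]; simp

/-- sheared structure -/
theorem IsBB.shear {M : Finset X} {φ : (Vec t × Vec m₁) →ₗ[ZMod 2] X} (h : IsBB M φ)
    (l : Vec t →ₗ[ZMod 2] Vec m₁) :
    ∃ φ' : (Vec t × Vec m₁) →ₗ[ZMod 2] X, IsBB M φ' ∧ ∀ b k, φ' (b, k) = φ (b, k + l b) := by
  refine ⟨φ ∘ₗ (LinearMap.fst _ _ _).prod (LinearMap.snd _ _ _ + l ∘ₗ LinearMap.fst _ _ _),
    ⟨fun w hw => ?_, fun a w ha => ?_⟩, fun b k => ?_⟩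
  · simp at hw
    exact h.1 _ hw
  · simp
    exact h.2 _ _ ha
  · simp

def ShearBd (M : Finset X) (φ : (Vec t × Vec m₁) →ₗ[ZMod 2] X) (ε : ℝ) : Prop :=
  ∀ (l : Vec t →ₗ[ZMod 2] Vec m₁) (x : X),
    ((Finset.univ.filter fun k : Vec m₁ => ∀ b, x + φ (b, k + l b) ∈ M).card : ℝ) < ε * 2 ^ m₁

theorem both_bd (M : Finset X) (φ : (Vec t × Vec m₁) →ₗ[ZMod 2] X) (ε : ℝ)
    (h : ShearBd M φ ε) (l : Vec t →ₗ[ZMod 2] Vec m₁) (x : X) (Q : Vec m₁ → Prop) [DecidablePred Q]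
    (hQ : ∀ k, Q k → ∃ b0 b1, b0 ≠ b1 ∧ x + φ (b0, k + l b0) ∉ M ∧ x + φ (b1, k + l b1) ∉ M) :
    ((Finset.univ.filter Q).card : ℝ) ≤ gsum M φ x - (1 - ε) * 2 ^ m₁ := by
  have h1 : gsum M φ x = ∑ k : Vec m₁,
      (Finset.univ.filter fun b : Vec t => x + φ (b, k + l b) ∉ M).card := by
    unfold gsum
    simp_rw [← fun b => cnt_eq M φ x b (l b), Finset.card_filter]
    exact Finset.sum_comm
  have h2 : (Finset.univ.filter Q).card +
      (Finset.univ.filter fun k : Vec m₁ => ¬ ∀ b, x + φ (b, k + l b) ∈ M).card ≤ gsum M φ x := by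
    rw [h1, Finset.card_filter, Finset.card_filter, ← Finset.sum_add_distrib]
    apply Finset.sum_le_sum
    intro k _
    by_cases hk : Q k
    · obtain ⟨b0, b1, hne, hb0, hb1⟩ := hQ k hk
      have : 1 < (Finset.univ.filter fun b : Vec t => x + φ (b, k + l b) ∉ M).card := by
        rw [Finset.one_lt_card]
        exact ⟨b0, by simpa using hb0, b1, by simpa using hb1, hne⟩
      rw [if_pos hk]
      split_ifs <;> omega
    · rw [if_neg hk]
      by_cases h3 : ∀ b, x + φ (b, k + l b) ∈ M
      · rw [if_neg (not_not.2 h3)]; omega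
      · rw [if_pos h3]
        push Not at h3
        obtain ⟨b, hb⟩ := h3
        have : 0 < (Finset.univ.filter fun b : Vec t => x + φ (b, k + l b) ∉ M).card := by
          rw [Finset.card_pos]
          exact ⟨b, by simpa using hb⟩
        omega
  have h3 := Finset.card_filter_add_card_filter_not (s := Finset.univ)
    (fun k : Vec m₁ => ∀ b, x + φ (b, k + l b) ∈ M)
  rw [Finset.card_univ, card_Vec] at h3
  have h4 := h l x
  have h3' : ((Finset.univ.filter fun k : Vec m₁ => ∀ b, x + φ (b, k + l b) ∈ M).card : ℝ) +
    ((Finset.univ.filter fun k : Vec m₁ => ¬ ∀ b, x + φ (b, k + l b) ∈ M).card : ℝ) = 2 ^ m₁ := by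
    exact_mod_cast h3
  have h2' : ((Finset.univ.filter Q).card : ℝ) +
      ((Finset.univ.filter fun k : Vec m₁ => ¬ ∀ b, x + φ (b, k + l b) ∈ M).card : ℝ)
      ≤ gsum M φ x := by exact_mod_cast h2
  linarith

theorem gsum_lb (M : Finset X) (φ : (Vec t × Vec m₁) →ₗ[ZMod 2] X) (ε : ℝ)
    (h : ShearBd M φ ε) (x : X) : (1 - ε) * 2 ^ m₁ ≤ gsum M φ x := by
  have := both_bd M φ ε h 0 x (fun _ => False) (fun k hk => hk.elim)
  simp at this
  linarith

theorem pair_bd0 (M : Finset X) (φ : (Vec t × Vec m₁) →ₗ[ZMod 2] X) (ε : ℝ)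
    (h : ShearBd M φ ε) (x : X) (b0 b1 : Vec t) (f : Vec t →ₗ[ZMod 2] ZMod 2) (h0 : f b0 = 0)
    (h1 : f b1 = 1) :
    (cnt M φ (x + φ (b0, 0)) : ℝ) * cnt M φ (x + φ (b1, 0))
      ≤ 2 ^ m₁ * (gsum M φ x - (1 - ε) * 2 ^ m₁) := by
  have hne : b0 ≠ b1 := by rintro rfl; rw [h0] at h1; exact zero_ne_one h1
  have h2 : ∀ u : Vec m₁, ((Finset.univ.filter fun k : Vec m₁ =>
      x + φ (b0, k) ∉ M ∧ x + φ (b1, k + u) ∉ M).card : ℝ) ≤ gsum M φ x - (1 - ε) * 2 ^ m₁ := by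
    intro u
    refine both_bd M φ ε h (f.smulRight u) x _ fun k hk => ⟨b0, b1, hne, ?_, ?_⟩
    · simpa [h0] using hk.1
    · simpa [h1] using hk.2
  have h3 : ∑ u : Vec m₁, (Finset.univ.filter fun k : Vec m₁ =>
      x + φ (b0, k) ∉ M ∧ x + φ (b1, k + u) ∉ M).card
      = cnt M φ (x + φ (b0, 0)) * cnt M φ (x + φ (b1, 0)) := by
    simp only [Finset.card_filter]
    rw [Finset.sum_comm, ← cnt_eq M φ x b0 0, Finset.card_filter, Finset.sum_mul]
    apply Finset.sum_congr rfl
    intro k _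
    rw [← cnt_eq M φ x b1 k, Finset.card_filter, Finset.mul_sum]
    apply Finset.sum_congr rfl
    intro u _
    rw [add_zero, add_comm u k]
    by_cases ha : x + φ (b0, k) ∈ M <;> by_cases hb : x + φ (b1, k + u) ∈ M <;> simp [ha, hb]
  have h4 : (∑ u : Vec m₁, ((Finset.univ.filter fun k : Vec m₁ =>
      x + φ (b0, k) ∉ M ∧ x + φ (b1, k + u) ∉ M).card : ℝ))
      = (cnt M φ (x + φ (b0, 0)) : ℝ) * cnt M φ (x + φ (b1, 0)) := by exact_mod_cast h3
  rw [← h4]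
  refine le_trans (Finset.sum_le_sum fun u _ => h2 u) (le_of_eq ?_)
  rw [Finset.sum_const, Finset.card_univ, card_Vec, nsmul_eq_mul]
  push_cast; rfl

theorem pair_bd (M : Finset X) (φ : (Vec t × Vec m₁) →ₗ[ZMod 2] X) (ε : ℝ)
    (h : ShearBd M φ ε) (x : X) (b0 b1 : Vec t) (hne : b0 ≠ b1) :
    (cnt M φ (x + φ (b0, 0)) : ℝ) * cnt M φ (x + φ (b1, 0))
      ≤ 2 ^ m₁ * (gsum M φ x - (1 - ε) * 2 ^ m₁) := by
  obtain ⟨f, hf⟩ := exists_dual_one (a := b0 + b1) (fun h0 => hne (z2_eq_of_add h0))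
  rw [map_add] at hf
  rcases z2_cases (f b0) with h0 | h0
  · rw [h0, zero_add] at hf
    exact pair_bd0 M φ ε h x b0 b1 f h0 hf
  · rw [h0] at hf
    have h1 : f b1 = 0 := by
      rcases z2_cases (f b1) with h1 | h1
      · exact h1
      · rw [h1] at hf; exact absurd hf (by decide)
    rw [mul_comm]
    exact pair_bd0 M φ ε h x b1 b0 f h1 h0

theorem good_struct (M : Finset X) (φ : (Vec t × Vec m₁) →ₗ[ZMod 2] X) (ρ : ℝ) (hρ : 0 < ρ)
    (hρ2 : ρ ≤ 1 / 2) (h : ShearBd M φ (ρ ^ 2)) (x : X) (hg : (gsum M φ x : ℝ) ≤ (1 + ρ) * 2 ^ m₁) :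
    ∃ b0, (1 - 4 * ρ * 4 ^ t) * 2 ^ m₁ ≤ cnt M φ (x + φ (b0, 0)) ∧
      ∀ b, b ≠ b0 → (cnt M φ (x + φ (b, 0)) : ℝ) ≤ 4 * ρ * 4 ^ t * 2 ^ m₁ := by
  have hlb := gsum_lb M φ _ h x
  set κ : ℝ := 2 ^ m₁ with hκ
  have hκ0 : 0 < κ := by positivity
  have ht1 : (1:ℝ) ≤ 2 ^ t := one_le_pow₀ one_le_two
  have ht4 : (4:ℝ) ^ t = 2 ^ t * 2 ^ t := by rw [← mul_pow]; norm_num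
  have hgr : (gsum M φ x : ℝ) = ∑ b : Vec t, (cnt M φ (x + φ (b, 0)) : ℝ) := by
    unfold gsum; push_cast; rfl
  obtain ⟨b0, -, hb0⟩ : ∃ b0 ∈ (Finset.univ : Finset (Vec t)),
      (1 - ρ ^ 2) * κ / 2 ^ t ≤ (cnt M φ (x + φ (b0, 0)) : ℝ) := by
    apply Finset.exists_le_of_sum_le Finset.univ_nonempty
    rw [← hgr, Finset.sum_const, Finset.card_univ, card_Vec, nsmul_eq_mul]
    refine le_trans (le_of_eq ?_) hlb
    push_cast
    field_simp
  have hoth : ∀ b, b ≠ b0 → (cnt M φ (x + φ (b, 0)) : ℝ) ≤ 2 * ρ * 2 ^ t * κ := by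
    intro b hb
    have h1 := pair_bd M φ _ h x b b0 hb
    rw [← hκ] at h1
    by_contra hcon
    push Not at hcon
    have h2 : κ * (gsum M φ x - (1 - ρ ^ 2) * κ) ≤ κ * ((ρ + ρ ^ 2) * κ) := by
      gcongr; linarith
    have hpos : 0 < (1 - ρ ^ 2) * κ / 2 ^ t := by
      have : 0 < 1 - ρ ^ 2 := by nlinarith
      positivity
    have h3 : (2 * ρ * 2 ^ t * κ) * ((1 - ρ ^ 2) * κ / 2 ^ t) <
        (cnt M φ (x + φ (b, 0)) : ℝ) * cnt M φ (x + φ (b0, 0)) :=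
      mul_lt_mul hcon hb0 hpos (by positivity)
    have h4 : (2 * ρ * 2 ^ t * κ) * ((1 - ρ ^ 2) * κ / 2 ^ t) = κ * (2 * ρ * (1 - ρ ^ 2) * κ) := by
      field_simp
    rw [h4] at h3
    have h5 : κ * ((ρ + ρ ^ 2) * κ) ≤ κ * (2 * ρ * (1 - ρ ^ 2) * κ) := by
      gcongr
      nlinarith [mul_nonneg hρ.le (mul_nonneg (by linarith : (0:ℝ) ≤ 1 + ρ) (by linarith : (0:ℝ) ≤ 1 - 2 * ρ))]
    linarith
  refine ⟨b0, ?_, fun b hb => le_trans (hoth b hb) ?_⟩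
  · have h1 : (gsum M φ x : ℝ) ≤ cnt M φ (x + φ (b0, 0)) + 2 ^ t * (2 * ρ * 2 ^ t * κ) := by
      rw [hgr, ← Finset.add_sum_erase _ _ (Finset.mem_univ b0)]
      gcongr
      refine le_trans (Finset.sum_le_sum fun b hb => hoth b (Finset.ne_of_mem_erase hb)) ?_
      rw [Finset.sum_const, nsmul_eq_mul]
      gcongr
      have : ((Finset.univ : Finset (Vec t)).erase b0).card ≤ 2 ^ t := by
        refine le_trans (Finset.card_le_univ _) ?_
        rw [card_Vec]
      exact_mod_cast this
    rw [ht4]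
    have h2 : ρ ^ 2 ≤ 2 * ρ * (2 ^ t * 2 ^ t) := by nlinarith [mul_le_mul ht1 ht1 zero_le_one (by positivity)]
    have h3 := mul_le_mul_of_nonneg_right h2 hκ0.le
    linarith
  · rw [ht4]
    have : 2 * ρ * 2 ^ t ≤ 4 * ρ * (2 ^ t * 2 ^ t) := by nlinarith [mul_pos hρ (by positivity : (0:ℝ) < 2 ^ t)]
    gcongr

theorem no_pg (M : Finset X) (φ : (Vec t × Vec m₁) →ₗ[ZMod 2] X) (hφ : IsBB M φ) {s m : ℕ}
    (hm : m ≤ m₁) (hno : ¬ HasBB s m M) (η : ℝ) (hη : 2 ^ s * 2 ^ m * η < 1)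
    (p : Vec s →ₗ[ZMod 2] X) (hp : ∀ a, a ≠ 0 → (cnt M φ (p a) : ℝ) ≤ η * 2 ^ m₁) (hη0 : 0 ≤ η) : False := by
  let j : Vec m →ₗ[ZMod 2] Vec m₁ := Function.ExtendByZero.linearMap (ZMod 2) (Fin.castLE hm)
  have hj : ∀ w, j w = 0 → w = 0 := by
    intro w hw
    funext i
    have := congrFun hw (Fin.castLE hm i)
    simpa [j, (Fin.castLE_injective hm).extend_apply] using this
  have hcard : ∀ a w, (Finset.univ.filter fun k : Vec m₁ => p a + φ (0, k + j w) ∉ M).card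
      = cnt M φ (p a) := by
    intro a w
    rw [cnt_eq]; simp [show ((0 : Vec t), (0 : Vec m₁)) = 0 from rfl]
  obtain ⟨r, hr⟩ := union_bound (E := Vec s) (K := Vec m₁)
    ((Finset.univ : Finset (Vec s × Vec m)).filter fun i => i.1 ≠ 0) (fun i => i.1)
    (fun i => Finset.univ.filter fun k : Vec m₁ => p i.1 + φ (0, k + j i.2) ∉ M)
    (fun i hi => by simpa using hi) (by
      rw [card_Vec]
      have : ∑ i ∈ (Finset.univ : Finset (Vec s × Vec m)).filter (fun i => i.1 ≠ 0),
        ((Finset.univ.filter fun k : Vec m₁ => p i.1 + φ (0, k + j i.2) ∉ M).card : ℝ) < 2 ^ m₁ := by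
        refine lt_of_le_of_lt (Finset.sum_le_sum (g := fun _ => η * 2 ^ m₁) fun i hi => ?_) ?_
        · rw [hcard]
          exact hp _ (by simpa using hi)
        · rw [Finset.sum_const, nsmul_eq_mul]
          have h1 : ((Finset.univ : Finset (Vec s × Vec m)).filter fun i => i.1 ≠ 0).card ≤ 2 ^ s * 2 ^ m := by
            refine le_trans (Finset.card_le_univ _) ?_
            rw [Fintype.card_prod, card_Vec, card_Vec]
          have h2 : (((Finset.univ : Finset (Vec s × Vec m)).filter fun i => i.1 ≠ 0).card : ℝ) ≤ 2 ^ s * 2 ^ m := by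
            exact_mod_cast h1
          calc _ ≤ (2 ^ s * 2 ^ m : ℝ) * (η * 2 ^ m₁) := by gcongr
            _ = (2 ^ s * 2 ^ m * η) * 2 ^ m₁ := by ring
            _ < 1 * 2 ^ m₁ := by gcongr
            _ = _ := one_mul _
      exact_mod_cast this)
  apply hno
  refine ⟨(p + φ ∘ₗ LinearMap.inr _ _ _ ∘ₗ r).coprod (φ ∘ₗ LinearMap.inr _ _ _ ∘ₗ j), ?_, ?_⟩
  · intro w hw
    simp only [LinearMap.coprod_apply, map_zero, LinearMap.comp_apply, LinearMap.inr_apply,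
      zero_add] at hw
    exact hj _ (hφ.1 _ hw)
  · intro a w ha
    have := hr (a, w) (by simpa using ha)
    simp only [Finset.mem_filter, Finset.mem_univ, true_and, not_not] at this
    simp only [LinearMap.coprod_apply, LinearMap.add_apply, LinearMap.comp_apply, LinearMap.inr_apply]
    rw [add_assoc, ← map_add]
    simpa using this

theorem exists_avoid {X : Type*} [AddCommGroup X] [Fintype X] (Bad : Finset X) (hB : 4 * Bad.card < Fintype.card X) (a b c : X) :
    ∃ x, x ∉ Bad ∧ x + a ∉ Bad ∧ x + b ∉ Bad ∧ x + c ∉ Bad := by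
  by_contra hcon
  have h1 : ∀ d : X, (Finset.univ.filter fun x => x + d ∈ Bad).card = Bad.card := by
    intro d
    apply Finset.card_equiv (Equiv.addRight d)
    intro x; simp
  have h2 : (Finset.univ : Finset X) ⊆ ((Bad ∪ (Finset.univ.filter fun x => x + a ∈ Bad)) ∪
      ((Finset.univ.filter fun x => x + b ∈ Bad) ∪ (Finset.univ.filter fun x => x + c ∈ Bad))) := by
    intro x _
    by_contra hx
    apply hcon
    simp only [Finset.mem_union, Finset.mem_filter, Finset.mem_univ, true_and, not_or] at hx
    exact ⟨x, hx.1.1, hx.1.2, hx.2.1, hx.2.2⟩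
  have h3 := Finset.card_le_card h2
  have h4 := Finset.card_union_le (Bad ∪ (Finset.univ.filter fun x => x + a ∈ Bad))
      ((Finset.univ.filter fun x => x + b ∈ Bad) ∪ (Finset.univ.filter fun x => x + c ∈ Bad))
  have h5 := Finset.card_union_le Bad (Finset.univ.filter fun x => x + a ∈ Bad)
  have h6 := Finset.card_union_le (Finset.univ.filter fun x => x + b ∈ Bad) (Finset.univ.filter fun x => x + c ∈ Bad)
  rw [h1] at h5
  rw [h1, h1] at h6
  rw [Finset.card_univ] at h3
  omega

theorem abs_subspace {E : Type*} [AddCommGroup E] [Module (ZMod 2) E] [Fintype X] (j : E →ₗ[ZMod 2] X)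
    (Bad : Finset X) (T : Set X)
    (hB : 4 * Bad.card < Fintype.card X) (hinv : ∀ x b, x + j b ∈ Bad → x ∈ Bad)
    (hex : ∀ x, x ∉ Bad → ∃ b, x + j b ∈ T)
    (huniq : ∀ y b, y ∈ T → y + j b ∈ T → b = 0)
    (hadd : ∀ y z, y ∈ T → z ∈ T → y + z ∉ Bad → y + z ∈ T) :
    ∃ W : Submodule (ZMod 2) X, T ⊆ W ∧ (∀ x, ∃ b, x + j b ∈ W) ∧ (∀ b, j b ∈ W → b = 0) ∧
      (∀ x ∈ W, x ∉ Bad → x ∈ T) := by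
  have hinv' : ∀ x b, x ∉ Bad → x + j b ∉ Bad := fun x b hx h => hx (hinv x b h)
  -- pick elements of T with three goodness conditions
  have pick : ∀ a b c : X, ∃ r ∈ T, r ∉ Bad ∧ r + a ∉ Bad ∧ r + b ∉ Bad ∧ r + c ∉ Bad := by
    intro a b c
    obtain ⟨x, hx, ha, hb, hc⟩ := exists_avoid Bad hB a b c
    obtain ⟨d, hd⟩ := hex x hx
    refine ⟨x + j d, hd, hinv' _ _ hx, ?_, ?_, ?_⟩
    · rw [add_right_comm]; exact hinv' _ _ ha
    · rw [add_right_comm]; exact hinv' _ _ hb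
    · rw [add_right_comm]; exact hinv' _ _ hc
  have three : ∀ x y z, x ∈ T → y ∈ T → z ∈ T → x + (y + z) ∉ Bad → x + (y + z) ∈ T := by
    intro x y z hx hy hz hg
    obtain ⟨r, hr, -, h1, h2, h3⟩ := pick x (x + y) z
    have k1 := hadd r x hr hx h1
    have k2 := hadd (r + x) y k1 hy (by rwa [add_assoc])
    have k3 := hadd r z hr hz h3
    have e : r + x + y + (r + z) = x + (y + z) := by
      have := z2_add_self r
      calc r + x + y + (r + z) = (r + r) + (x + (y + z)) := by abel
        _ = _ := by rw [this, zero_add]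
    have k4 := hadd _ _ k2 k3 (by rwa [e])
    rwa [e] at k4
  let W : Submodule (ZMod 2) X :=
    { carrier := {v | ∃ y ∈ T, ∃ z ∈ T, v = y + z}
      zero_mem' := by
        obtain ⟨r, hr, -⟩ := pick 0 0 0
        exact ⟨r, hr, r, hr, (z2_add_self r).symm⟩
      add_mem' := by
        rintro v v' ⟨y, hy, z, hz, rfl⟩ ⟨y', hy', z', hz', rfl⟩
        obtain ⟨r, hr, -, h1, h2, -⟩ := pick (y + z) (y' + z') 0
        refine ⟨_, three r y z hr hy hz h1, _, three r y' z' hr hy' hz' h2, ?_⟩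
        calc y + z + (y' + z') = (r + r) + (y + z + (y' + z')) := by rw [z2_add_self, zero_add]
          _ = _ := by abel
      smul_mem' := by
        rintro c v ⟨y, hy, z, hz, rfl⟩
        rcases z2_cases c with rfl | rfl
        · exact ⟨y, hy, y, hy, by rw [zero_smul, z2_add_self]⟩
        · exact ⟨y, hy, z, hz, by rw [one_smul]⟩ }
  have hW : ∀ v, v ∈ W ↔ ∃ y ∈ T, ∃ z ∈ T, v = y + z := fun v => Iff.rfl
  refine ⟨W, ?_, ?_, ?_, ?_⟩
  · intro y hy
    obtain ⟨r, hr, -, h1, -⟩ := pick y 0 0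
    refine (hW y).2 ⟨r + y, hadd r y hr hy h1, r, hr, ?_⟩
    rw [add_right_comm, z2_add_self, zero_add]
  · intro x
    obtain ⟨r, hr, -, h1, -⟩ := pick x 0 0
    obtain ⟨b, hb⟩ := hex _ h1
    refine ⟨b, (hW _).2 ⟨_, hb, r, hr, ?_⟩⟩
    calc x + j b = (r + r) + (x + j b) := by rw [z2_add_self, zero_add]
      _ = _ := by abel
  · intro b hb
    obtain ⟨y, hy, z, hz, e⟩ := (hW _).1 hb
    apply huniq z b hz
    rw [e, add_comm y z, ← add_assoc, z2_add_self, zero_add]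
    exact hy
  · intro x hx hg
    obtain ⟨y, hy, z, hz, rfl⟩ := (hW _).1 hx
    exact hadd y z hy hz hg

end stab
theorem proj_of_subspace {X : Type*} [AddCommGroup X] [Module (ZMod 2) X] {E : Type*} [AddCommGroup E]
    [Module (ZMod 2) E] (j : E →ₗ[ZMod 2] X) (W : Submodule (ZMod 2) X)
    (h1 : ∀ x, ∃ b, x + j b ∈ W) (h2 : ∀ b, j b ∈ W → b = 0) :
    ∃ p : X →ₗ[ZMod 2] E, Function.Surjective p ∧ ∀ x, p x = 0 ↔ x ∈ W := by
  choose f hf using h1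
  have huniq : ∀ x b, x + j b ∈ W → f x = b := by
    intro x b hb
    have := W.add_mem (hf x) hb
    have e : x + j (f x) + (x + j b) = j (f x + b) := by
      rw [map_add]
      calc x + j (f x) + (x + j b) = (x + x) + (j (f x) + j b) := by abel
        _ = _ := by rw [z2_add_self, zero_add]
    rw [e] at this
    exact z2_eq_of_add (h2 _ this)
  refine ⟨{ toFun := f, map_add' := fun x y => ?_, map_smul' := fun c x => ?_ }, fun b => ⟨j b, ?_⟩, fun x => ?_⟩
  · apply huniq
    have := W.add_mem (hf x) (hf y)
    rw [map_add]
    convert this using 1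
    abel
  · apply huniq
    have := W.smul_mem c (hf x)
    simpa using this
  · apply huniq
    rw [z2_add_self]
    exact W.zero_mem
  · constructor
    · intro h
      have h' : f x = 0 := h
      have := hf x
      rwa [h', map_zero, add_zero] at this
    · intro h
      apply huniq
      rwa [map_zero, add_zero]

theorem sum_cnt {X : Type} [AddCommGroup X] [Module (ZMod 2) X] {t m₁ : ℕ} [Fintype X]
    (M : Finset X) (φ : (Vec t × Vec m₁) →ₗ[ZMod 2] X) (c : X) :
    ∑ x : X, cnt M φ (x + c) = 2 ^ m₁ * (Mᶜ).card := by
  unfold cnt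
  simp only [Finset.card_filter]
  rw [Finset.sum_comm]
  have : ∀ k : Vec m₁, ∑ x : X, (if x + c + φ (0, k) ∉ M then 1 else 0) = (Mᶜ).card := by
    intro k
    rw [← Finset.card_filter]
    apply Finset.card_equiv (Equiv.addRight (c + φ (0, k)))
    intro x; simp [add_assoc]
  rw [Finset.sum_congr rfl fun k _ => this k, Finset.sum_const, Finset.card_univ, card_Vec, smul_eq_mul]

theorem bad_bd {X : Type} [AddCommGroup X] [Module (ZMod 2) X] {t m₁ : ℕ} [Fintype X]
    (M : Finset X) (φ : (Vec t × Vec m₁) →ₗ[ZMod 2] X) (ρ : ℝ) (hρ : 0 < ρ)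
    (h : ShearBd M φ (ρ ^ 2)) (hM : (1 - (1 / 2) ^ t) * Fintype.card X ≤ (M.card : ℝ)) :
    ((Finset.univ.filter fun x : X => (1 + ρ) * 2 ^ m₁ < (gsum M φ x : ℝ)).card : ℝ)
      ≤ ρ * Fintype.card X := by
  set Bad := Finset.univ.filter fun x : X => (1 + ρ) * 2 ^ m₁ < (gsum M φ x : ℝ)
  have hc := Finset.card_add_card_compl M
  have hc' : (M.card : ℝ) + (Mᶜ).card = Fintype.card X := by exact_mod_cast hc
  have hf : (2:ℝ) ^ t * (1/2)^t = 1 := by rw [← mul_pow]; norm_num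
  have hC : 2 ^ t * ((Mᶜ).card : ℝ) ≤ Fintype.card X := by
    have : ((Mᶜ).card : ℝ) ≤ (1/2)^t * Fintype.card X := by linarith
    calc 2 ^ t * ((Mᶜ).card : ℝ) ≤ 2 ^ t * ((1/2)^t * Fintype.card X) := by gcongr
      _ = (2 ^ t * (1/2)^t) * Fintype.card X := by ring
      _ = _ := by rw [hf, one_mul]
  have hs : ∑ x : X, gsum M φ x = 2 ^ t * (2 ^ m₁ * (Mᶜ).card) := by
    unfold gsum
    rw [Finset.sum_comm, Finset.sum_congr rfl fun b _ => sum_cnt M φ (φ (b, 0)), Finset.sum_const,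
      Finset.card_univ, card_Vec, smul_eq_mul]
  have hs' : ∑ x : X, (gsum M φ x : ℝ) = 2 ^ t * (2 ^ m₁ * (Mᶜ).card) := by exact_mod_cast hs
  have hle : ∑ x : X, ((gsum M φ x : ℝ) - (1 - ρ ^ 2) * 2 ^ m₁) ≤ ρ ^ 2 * 2 ^ m₁ * Fintype.card X := by
    rw [Finset.sum_sub_distrib, hs', Finset.sum_const, Finset.card_univ, nsmul_eq_mul]
    have := mul_le_mul_of_nonneg_right hC (by positivity : (0:ℝ) ≤ 2 ^ m₁)
    linarith
  have hge : (Bad.card : ℝ) * (ρ * 2 ^ m₁) ≤ ∑ x : X, ((gsum M φ x : ℝ) - (1 - ρ ^ 2) * 2 ^ m₁) := by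
    calc (Bad.card : ℝ) * (ρ * 2 ^ m₁) = ∑ x ∈ Bad, (ρ * 2 ^ m₁) := by
          rw [Finset.sum_const, nsmul_eq_mul]
      _ ≤ ∑ x ∈ Bad, ((gsum M φ x : ℝ) - (1 - ρ ^ 2) * 2 ^ m₁) := by
          apply Finset.sum_le_sum
          intro x hx
          have hx' := (Finset.mem_filter.1 hx).2
          have : 0 ≤ ρ ^ 2 * 2 ^ m₁ := by positivity
          linarith
      _ ≤ _ := by
          apply Finset.sum_le_sum_of_subset_of_nonneg (Finset.subset_univ _)
          intro x _ _
          have := gsum_lb M φ _ h x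
          linarith
  have hpos : (0:ℝ) < ρ * 2 ^ m₁ := by positivity
  have := le_trans hge hle
  by_contra hcon
  push Not at hcon
  have := mul_lt_mul_of_pos_right hcon hpos
  nlinarith

theorem stab_core {X : Type} [AddCommGroup X] [Module (ZMod 2) X] {t m₁ m : ℕ} [Fintype X]
    (M : Finset X) (φ : (Vec t × Vec m₁) →ₗ[ZMod 2] X) (hφ : IsBB M φ) (ρ : ℝ) (hρ : 0 < ρ)
    (hm : m ≤ m₁) (hno : ¬ HasBB (t + 1) m M) (hη : 2 ^ (t + 1) * 2 ^ m * (4 * ρ * 4 ^ t) < 1)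
    (h : ShearBd M φ (ρ ^ 2)) (hM : (1 - (1 / 2) ^ t) * Fintype.card X ≤ (M.card : ℝ)) :
    ∃ p : X →ₗ[ZMod 2] Vec t, Function.Surjective p ∧
      (({v : X | p v ≠ 0 ∧ v ∉ M}.ncard : ℕ) : ℝ) ≤ (ρ + 4 * ρ * 4 ^ t) * Fintype.card X := by
  have hbad := bad_bd M φ ρ hρ h hM
  set η := 4 * ρ * 4 ^ t with hηdef
  have hη0 : 0 < η := by positivity
  have hη2 : η < 1 / 2 := by
    have h1 : (1:ℝ) ≤ 2 ^ m := one_le_pow₀ one_le_two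
    have h2 : (1:ℝ) ≤ 2 ^ t := one_le_pow₀ one_le_two
    have h3 : (2:ℝ) ≤ 2 ^ (t + 1) * 2 ^ m := by rw [pow_succ]; nlinarith
    nlinarith
  have hρη : 4 * ρ ≤ η := by
    have h2 : (1:ℝ) ≤ 4 ^ t := one_le_pow₀ (by norm_num)
    nlinarith
  have hρ2 : ρ ≤ 1 / 2 := by linarith
  set κ : ℝ := 2 ^ m₁ with hκ
  have hκ0 : 0 < κ := by positivity
  set Bad := Finset.univ.filter fun x : X => (1 + ρ) * κ < (gsum M φ x : ℝ) with hBad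
  have hgood : ∀ x, x ∉ Bad ↔ (gsum M φ x : ℝ) ≤ (1 + ρ) * κ := by
    intro x; simp [hBad]
  have hN : (0:ℝ) < Fintype.card X := by exact_mod_cast Fintype.card_pos
  have hB4 : 4 * Bad.card < Fintype.card X := by
    have : (4:ℝ) * Bad.card < Fintype.card X := by nlinarith
    exact_mod_cast this
  have hstr : ∀ x, x ∉ Bad → ∃ b0, (1 - η) * κ ≤ cnt M φ (x + φ (b0, 0)) ∧
      ∀ b, b ≠ b0 → (cnt M φ (x + φ (b, 0)) : ℝ) ≤ η * κ :=
    fun x hx => good_struct M φ ρ hρ hρ2 h x ((hgood x).1 hx)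
  have hgap : η * κ < (1 - η) * κ := by gcongr; linarith
  have h00 : φ (0, 0) = 0 := φ.map_zero
  set T : Set X := {y | y ∉ Bad ∧ (1 - η) * κ ≤ cnt M φ y} with hT
  have hTs : ∀ y ∈ T, ∀ b, b ≠ 0 → (cnt M φ (y + φ (b, 0)) : ℝ) ≤ η * κ := by
    rintro y ⟨hy1, hy2⟩ b hb
    obtain ⟨b0, h1, h2⟩ := hstr y hy1
    have : b0 = 0 := by
      by_contra hne
      have := h2 0 (Ne.symm hne)
      rw [h00, add_zero] at this
      linarith
    subst this
    exact h2 b hb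
  have hBinv : ∀ x b k, x + φ (b, k) ∈ Bad ↔ x ∈ Bad := by
    intro x b k
    simp only [hBad, Finset.mem_filter, Finset.mem_univ, true_and]
    rw [gsum_shift]
  have hex : ∀ x, x ∉ Bad → ∃ b, x + φ (b, 0) ∈ T := by
    intro x hx
    obtain ⟨b0, h1, -⟩ := hstr x hx
    exact ⟨b0, fun h => hx ((hBinv _ _ _).1 h), h1⟩
  obtain ⟨W, hTW, hW1, hW2, hW3⟩ := abs_subspace (φ ∘ₗ LinearMap.inl (ZMod 2) (Vec t) (Vec m₁)) Bad T hB4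
    (fun x b hx => (hBinv x b 0).1 hx) hex
    (fun y b hy hyb => by
      by_contra hb
      have h1 := hTs y hy b hb
      have h2 := hyb.2
      simp only [LinearMap.comp_apply, LinearMap.inl_apply] at h2
      linarith)
    (fun y z hy hz hg => by
      refine ⟨hg, ?_⟩
      obtain ⟨b0, h1, h2⟩ := hstr _ hg
      by_cases hb0 : b0 = 0
      · rwa [hb0, h00, add_zero] at h1
      exfalso
      obtain ⟨f, hf⟩ := exists_dual_one hb0
      refine no_pg M φ hφ hm hno η hη
        (extL (φ ∘ₗ LinearMap.inl (ZMod 2) (Vec t) (Vec m₁) + f.smulRight y) (y + z)) ?_ hη0.le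
      intro a ha
      rw [extL_apply]
      simp only [LinearMap.comp_apply, LinearMap.inl_apply, LinearMap.add_apply, LinearMap.smulRight_apply]
      set b : Vec t := fun i => a i.succ with hb
      rcases z2_cases (a 0) with ha0 | ha0 <;> rcases z2_cases (f b) with hfb | hfb
      · have hbne : b ≠ 0 := tail_ne ha ha0
        rw [ha0, hfb, zero_smul, zero_smul, zero_add, add_zero]
        have : cnt M φ (φ (b, 0)) = 0 := by
          unfold cnt
          rw [Finset.card_eq_zero, Finset.filter_eq_empty_iff]
          intro k _
          rw [not_not, ← map_add]
          apply hφ.2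
          simpa using hbne
        rw [this]
        push_cast
        positivity
      · have hbne : b ≠ 0 := tail_ne ha ha0
        rw [ha0, hfb, zero_smul, one_smul, zero_add, add_comm]
        exact hTs y hy b hbne
      · rw [ha0, hfb, one_smul, zero_smul, add_zero]
        apply h2
        intro e
        rw [e, hf] at hfb
        exact one_ne_zero hfb
      · rw [ha0, hfb, one_smul, one_smul]
        have e : y + z + (φ (b, 0) + y) = z + φ (b, 0) := by
          calc y + z + (φ (b, 0) + y) = (y + y) + (z + φ (b, 0)) := by abel
            _ = _ := by rw [z2_add_self, zero_add]
        rw [e]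
        apply hTs z hz
        intro e
        rw [e, map_zero] at hfb
        exact zero_ne_one hfb)
  obtain ⟨p, hp1, hp2⟩ := proj_of_subspace _ W hW1 hW2
  refine ⟨p, hp1, ?_⟩
  have hφW : ∀ k, φ (0, k) ∈ W := by
    intro k
    obtain ⟨x, hx, -⟩ := exists_avoid Bad hB4 0 0 0
    obtain ⟨b, hb⟩ := hex x hx
    have h2 : x + φ (b, 0) + φ (0, k) ∈ T := by
      refine ⟨fun h => hb.1 ((hBinv _ _ _).1 h), ?_⟩
      rw [cnt_shift]
      exact hb.2
    have := W.sub_mem (hTW h2) (hTW hb)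
    simpa using this
  set S := Finset.univ.filter fun v : X => v ∉ W ∧ v ∉ M with hS
  have hSn : {v : X | p v ≠ 0 ∧ v ∉ M}.ncard = S.card := by
    rw [← Set.ncard_coe_finset]
    congr 1
    ext v
    simp [hS, hp2]
  rw [hSn]
  have h1 : ∑ x ∈ Finset.univ.filter (fun x : X => x ∉ W), cnt M φ x = 2 ^ m₁ * S.card := by
    unfold cnt
    simp only [Finset.card_filter (fun k : Vec m₁ => _ ∉ M)]
    rw [Finset.sum_comm]
    have : ∀ k : Vec m₁, ∑ x ∈ Finset.univ.filter (fun x : X => x ∉ W),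
        (if x + φ (0, k) ∉ M then 1 else 0) = S.card := by
      intro k
      rw [← Finset.card_filter, Finset.filter_filter]
      apply Finset.card_equiv (Equiv.addRight (φ (0, k)))
      intro x
      simp only [hS, Finset.mem_filter, Finset.mem_univ, true_and, Equiv.coe_addRight]
      rw [W.add_mem_iff_left (hφW k)]
    rw [Finset.sum_congr rfl fun k _ => this k, Finset.sum_const, Finset.card_univ, card_Vec, smul_eq_mul]
  have h1' : ∑ x ∈ Finset.univ.filter (fun x : X => x ∉ W), (cnt M φ x : ℝ) = κ * S.card := by
    rw [hκ]; exact_mod_cast h1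
  have h2 : ∑ x ∈ Finset.univ.filter (fun x : X => x ∉ W), (cnt M φ x : ℝ)
      ≤ ∑ x : X, ((if x ∈ Bad then κ else 0) + η * κ) := by
    refine le_trans (Finset.sum_le_sum fun x hx => ?_)
      (Finset.sum_le_sum_of_subset_of_nonneg (Finset.subset_univ _) fun x _ _ => ?_)
    · have hxW : x ∉ W := (Finset.mem_filter.1 hx).2
      by_cases hxB : x ∈ Bad
      · rw [if_pos hxB]
        have : cnt M φ x ≤ 2 ^ m₁ := by
          unfold cnt
          refine le_trans (Finset.card_le_univ _) ?_
          rw [card_Vec]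
        have : (cnt M φ x : ℝ) ≤ κ := by rw [hκ]; exact_mod_cast this
        have : 0 < η * κ := by positivity
        linarith
      · rw [if_neg hxB, zero_add]
        obtain ⟨b0, k1, k2⟩ := hstr x hxB
        by_cases hb0 : b0 = 0
        · rw [hb0, h00, add_zero] at k1
          exact absurd (hTW ⟨hxB, k1⟩) hxW
        · have := k2 0 (Ne.symm hb0)
          rwa [h00, add_zero] at this
    · split_ifs <;> positivity
  rw [h1', Finset.sum_add_distrib, ← Finset.sum_filter, Finset.sum_const, Finset.sum_const,
    Finset.card_univ, nsmul_eq_mul, nsmul_eq_mul] at h2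
  have h3 : (Finset.univ.filter fun x => x ∈ Bad) = Bad := by ext x; simp
  rw [h3] at h2
  have h4 : κ * S.card ≤ κ * ((ρ + η) * Fintype.card X) := by
    have := mul_le_mul_of_nonneg_left hbad hκ0.le
    linarith
  exact le_of_mul_le_mul_left h4 hκ0

theorem q_shear (t m : ℕ) (ε : ℝ) (hε : 0 < ε) : ∃ m₀ : ℕ, ∀ m₁ ≥ m₀,
    ∀ {X : Type} [AddCommGroup X] [Module (ZMod 2) X] [Fintype X] (M : Finset X)
    (φ : (Vec t × Vec m₁) →ₗ[ZMod 2] X), IsBB M φ → ¬ HasBB (t + 1) m M → ShearBd M φ ε := by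
  obtain ⟨m₀, hq⟩ := q_lemma t m ε hε
  refine ⟨m₀, fun m₁ hm₁ X _ _ _ M φ hφ hno l x => ?_⟩
  obtain ⟨φ', hφ', e⟩ := hφ.shear l
  have := hq _ hm₁ M φ' hφ' hno x
  simp only [e] at this
  exact this

theorem stability (t m : ℕ) (ε : ℝ) (hε : 0 < ε) : ∃ n₀ : ℕ, ∀ n ≥ n₀, ∀ M : Finset (Vec n),
    (1 - (1 / 2) ^ t) * 2 ^ n ≤ (M.card : ℝ) → ¬ HasBB (t + 1) m M →
    ∃ p : Vec n →ₗ[ZMod 2] Vec t, Function.Surjective p ∧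
      (({v : Vec n | p v ≠ 0 ∧ v ∉ M}.ncard : ℕ) : ℝ) ≤ ε * 2 ^ n := by
  set A : ℝ := 2 ^ (t + 1) * 2 ^ m * (4 * 4 ^ t) with hA
  have hA0 : 0 < A := by positivity
  set B : ℝ := 1 + 4 * 4 ^ t with hB
  have hB0 : 0 < B := by positivity
  set ρ : ℝ := min (1 / (2 * A)) (ε / B) with hρd
  have hρ : 0 < ρ := by positivity
  have h1 : A * ρ < 1 := by
    have : ρ ≤ 1 / (2 * A) := min_le_left _ _
    have : A * ρ ≤ A * (1 / (2 * A)) := by gcongr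
    have e : A * (1 / (2 * A)) = 1 / 2 := by field_simp
    linarith
  have h2 : B * ρ ≤ ε := by
    have : ρ ≤ ε / B := min_le_right _ _
    have : B * ρ ≤ B * (ε / B) := by gcongr
    have e : B * (ε / B) = ε := by field_simp
    linarith
  obtain ⟨m₀, hq⟩ := q_shear t m (ρ ^ 2) (by positivity)
  obtain ⟨n₀, hes⟩ := es_lemma t (max m m₀) ((1 / 2) ^ t) (by positivity)
  refine ⟨n₀, fun n hn M hM hno => ?_⟩
  obtain ⟨φ, hφ⟩ := hes n hn M (by convert hM using 2; ring)
  have hsh : ShearBd M φ (ρ ^ 2) := hq _ (le_max_right _ _) M φ hφ hno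
  have hcard : ((Fintype.card (Vec n) : ℕ) : ℝ) = 2 ^ n := by rw [card_Vec]; push_cast; rfl
  obtain ⟨p, hp, hc⟩ := stab_core M φ hφ ρ hρ (le_max_left _ _) hno (by
    refine lt_of_le_of_lt (le_of_eq ?_) h1; rw [hA]; ring) hsh (by rw [hcard]; exact hM)
  refine ⟨p, hp, le_trans hc ?_⟩
  rw [hcard]
  gcongr
  refine le_trans (le_of_eq ?_) h2
  rw [hB]; ring
section rep
universe u

theorem col_vec {V : Type u} {G : SimpleGraph V} {t : ℕ} (hc : G.Colorable (2 ^ t)) :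
    ∃ c : V → Vec t, ∀ u v, G.Adj u v → c u ≠ c v := by
  obtain ⟨C⟩ := hc
  have e : Fin (2 ^ t) ≃ Vec t := Fintype.equivOfCardEq (by rw [card_Vec, Fintype.card_fin])
  exact ⟨fun v => e (C v), fun u v h h' => C.valid h (e.injective h')⟩

theorem bb_restr {V : Type u} [Fintype V] [DecidableEq V] {G : SimpleGraph V} {t : ℕ}
    (hc : G.Colorable (2 ^ t)) {X : Type} [AddCommGroup X] [Module (ZMod 2) X]
    (M : Finset X) (h0 : 0 ∉ M) (h : HasBB t (Fintype.card V) M) :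
    HasRestriction (cycleMatroid G) (M : Set X) := by
  obtain ⟨c, hc⟩ := col_vec hc
  obtain ⟨φ, hφ1, hφ2⟩ := h
  set cl := Fintype.linearCombination (ZMod 2) c with hcl
  let eq := LinearEquiv.funCongrLeft (ZMod 2) (ZMod 2) (Fintype.equivFin V).symm
  refine ⟨φ ∘ₗ cl.prod eq.toLinearMap, ?_, ?_⟩
  · rw [← LinearMap.ker_eq_bot, LinearMap.ker_eq_bot']
    intro x hx
    have hx' : φ (cl x, eq x) = 0 := hx
    by_cases hz : cl x = 0
    · rw [hz] at hx'
      exact eq.map_eq_zero_iff.1 (hφ1 _ hx')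
    · exact absurd (hx' ▸ hφ2 _ _ hz) h0
  · rintro _ ⟨_, ⟨u, v, huv, rfl⟩, rfl⟩
    refine hφ2 _ _ ?_
    rw [map_add, hcl, Fintype.linearCombination_apply_single, Fintype.linearCombination_apply_single,
      one_smul, one_smul]
    exact fun h => hc u v huv (z2_eq_of_add h)

def MRep {E : Type u} [AddCommGroup E] [Module (ZMod 2) E] {X : Type} [AddCommGroup X]
    [Module (ZMod 2) X] (t : ℕ) (N : Set E) (D : Set X) : Prop :=
  ∃ b : E →ₗ[ZMod 2] Vec t, ∃ a : E →ₗ[ZMod 2] X,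
    (∀ x ∈ Submodule.span (ZMod 2) {e | e ∈ N ∧ b e = 0}, a x = 0 → x = 0) ∧
    ∀ e ∈ N, b e = 0 → a e ∈ D

theorem rep_restr {E : Type u} [AddCommGroup E] [Module (ZMod 2) E] [Fintype E]
    {X : Type} [AddCommGroup X] [Module (ZMod 2) X] [Fintype X] {t : ℕ} (N : Set E)
    (p : X →ₗ[ZMod 2] Vec t) (hp : Function.Surjective p) (M S : Finset X)
    (hS : ∀ v, p v ≠ 0 → v ∉ M → v ∈ S)
    (hcard : Fintype.card E * (S.card + 1) < Nat.card (LinearMap.ker p))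
    (hrep : MRep t N {v : X | v ∈ M ∧ p v = 0}) : HasRestriction N (M : Set X) := by
  obtain ⟨b, a, h1, h2⟩ := hrep
  obtain ⟨σ, hσ⟩ := LinearMap.exists_rightInverse_of_surjective p (LinearMap.range_eq_top.2 hp)
  have hσ' : ∀ z, p (σ z) = z := fun z => LinearMap.congr_fun hσ z
  set T := Submodule.span (ZMod 2) {e | e ∈ N ∧ b e = 0} with hT
  have hTb : ∀ x ∈ T, b x = 0 := by
    have : T ≤ LinearMap.ker b := Submodule.span_le.2 fun e he => he.2
    exact fun x hx => this hx
  have hTa : ∀ x ∈ T, p (a x) = 0 := by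
    have : T ≤ LinearMap.ker (p ∘ₗ a) := Submodule.span_le.2 fun e he => (h2 e he.1 he.2).2
    exact fun x hx => this hx
  let y : E →ₗ[ZMod 2] X := σ ∘ₗ b + (a - σ ∘ₗ p ∘ₗ a)
  have hyT : ∀ x ∈ T, y x = a x := by
    intro x hx
    simp [y, hTb x hx, hTa x hx]
  have hyp : ∀ x, p (y x) = b x := by
    intro x; simp [y, hσ']
  obtain ⟨r, hr⟩ := union_bound (E := E ⧸ T) (K := LinearMap.ker p)
    (Finset.univ.filter fun x : E => x ∉ T) (fun x => T.mkQ x)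
    (fun x => Finset.univ.filter fun w : LinearMap.ker p => y x + (w : X) ∈ insert 0 S)
    (by
      intro x hx
      simpa using hx)
    (by
      have hb : ∀ x : E, (Finset.univ.filter fun w : LinearMap.ker p =>
          y x + (w : X) ∈ insert 0 S).card ≤ S.card + 1 := by
        intro x
        refine le_trans (Finset.card_le_card_of_injOn (fun w => y x + (w : X)) ?_ ?_)
          (Finset.card_insert_le 0 S)
        · intro w hw
          simpa using hw
        · intro w _ w' _ hww
          exact Subtype.ext (add_left_cancel hww)
      refine lt_of_le_of_lt (Finset.sum_le_card_nsmul _ _ _ fun x _ => hb x) ?_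
      rw [smul_eq_mul]
      rw [Nat.card_eq_fintype_card] at hcard
      exact lt_of_le_of_lt (Nat.mul_le_mul_right _ (Finset.card_le_univ _)) hcard)
  let ψ : E →ₗ[ZMod 2] X := y + (LinearMap.ker p).subtype ∘ₗ r ∘ₗ T.mkQ
  have hψ : ∀ x, ψ x = y x + (r (T.mkQ x) : X) := fun x => rfl
  have hψT : ∀ x ∈ T, ψ x = a x := by
    intro x hx
    have : T.mkQ x = 0 := by simpa using hx
    rw [hψ, this, map_zero, hyT x hx]; simp
  have hψn : ∀ x ∉ T, ψ x ∉ insert 0 S := by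
    intro x hx
    have := hr x (by simpa using hx)
    simpa [hψ] using this
  refine ⟨ψ, ?_, ?_⟩
  · rw [← LinearMap.ker_eq_bot, LinearMap.ker_eq_bot']
    intro x hx
    by_cases hxT : x ∈ T
    · exact h1 x hxT (by rw [← hψT x hxT, hx])
    · exact absurd (hx ▸ Finset.mem_insert_self 0 S) (hψn x hxT)
  · rintro _ ⟨e, he, rfl⟩
    by_cases hbe : b e = 0
    · rw [hψT e (Submodule.subset_span ⟨he, hbe⟩)]
      exact (h2 e he hbe).1
    · have heT : e ∉ T := fun h => hbe (hTb e h)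
      by_contra hM
      refine hψn e heT (Finset.mem_insert_of_mem (hS _ ?_ hM))
      rw [hψ, map_add, hyp, (r (T.mkQ e)).2, add_zero]
      exact hbe

theorem rep_empty {V : Type u} [Fintype V] [DecidableEq V] {G : SimpleGraph V} {t : ℕ}
    {X : Type} [AddCommGroup X] [Module (ZMod 2) X]
    (h : MRep t (cycleMatroid G) (∅ : Set X)) : G.Colorable (2 ^ t) := by
  obtain ⟨b, a, -, h2⟩ := h
  have C : G.Coloring (Vec t) := SimpleGraph.Coloring.mk (fun v => b (Pi.single v 1)) (by
    intro u v huv h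
    refine h2 (Pi.single u 1 + Pi.single v 1) ⟨u, v, huv, rfl⟩ ?_
    rw [map_add, h, z2_add_self])
  have := C.colorable
  rwa [card_Vec] at this

theorem indep_of_card {X : Type} [AddCommGroup X] [Module (ZMod 2) X] [Fintype X] (D : Set X)
    (h0 : (0 : X) ∉ D) (ι : Type u) [Fintype ι] (h : 2 ^ (Fintype.card ι - 1) ≤ D.ncard) :
    ∃ d : ι → X, LinearIndependent (ZMod 2) d ∧ ∀ i, d i ∈ D := by
  obtain ⟨B, hBD, hsp, hli⟩ := exists_linearIndependent (ZMod 2) D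
  have hcard : Fintype.card ι ≤ Fintype.card B := by
    have h1 : Nat.card (Submodule.span (ZMod 2) B) = 2 ^ Fintype.card B := by
      have := Module.card_eq_pow_finrank (K := ZMod 2) (V := Submodule.span (ZMod 2) B)
      rw [Nat.card_eq_fintype_card, this, ZMod.card]
      congr 1
      have := finrank_span_set_eq_card hli
      rw [this, Set.toFinset_card]
    have h2 : (insert 0 D).ncard ≤ ((Submodule.span (ZMod 2) B : Submodule (ZMod 2) X) : Set X).ncard := by
      apply Set.ncard_le_ncard _ (Set.toFinite _)
      rw [hsp]
      rintro x (rfl | hx)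
      · exact Submodule.zero_mem _
      · exact Submodule.subset_span hx
    rw [Set.ncard_insert_of_notMem h0 (Set.toFinite _)] at h2
    have h3 : ((Submodule.span (ZMod 2) B : Submodule (ZMod 2) X) : Set X).ncard = 2 ^ Fintype.card B := h1
    rw [h3] at h2
    have : 2 ^ (Fintype.card ι - 1) < 2 ^ Fintype.card B := by omega
    have := (Nat.pow_lt_pow_iff_right (by norm_num : 1 < 2)).1 this
    omega
  obtain ⟨f⟩ := Function.Embedding.nonempty_of_card_le hcard
  exact ⟨fun i => (f i : X), hli.comp f f.injective, fun i => hBD (f i).2⟩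

theorem bridge_fun {V : Type u} [Fintype V] [DecidableEq V] (F : Finset (Sym2 V))
    (hforest : (SimpleGraph.fromEdgeSet (F : Set (Sym2 V))).IsAcyclic)
    (u v : V) (huv : u ≠ v) (he : s(u, v) ∈ F) :
    ∃ g : (V → ZMod 2) →ₗ[ZMod 2] ZMod 2, g (Pi.single u 1 + Pi.single v 1) = 1 ∧
      ∀ x y, x ≠ y → s(x, y) ∈ F → s(x, y) ≠ s(u, v) → g (Pi.single x 1 + Pi.single y 1) = 0 := by
  set H := SimpleGraph.fromEdgeSet (F : Set (Sym2 V)) with hH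
  have hadj : H.Adj u v := by simp [hH, he, huv]
  have hb : H.IsBridge s(u, v) :=
    SimpleGraph.isAcyclic_iff_forall_edge_isBridge.1 hforest hadj
  have hb := SimpleGraph.isBridge_iff.1 hb
  set K := H.deleteEdges {s(u, v)} with hK
  refine ⟨Fintype.linearCombination (ZMod 2) (fun w => if K.Reachable u w then (1 : ZMod 2) else 0), ?_, ?_⟩
  · rw [map_add, Fintype.linearCombination_apply_single, Fintype.linearCombination_apply_single]
    rw [if_pos (SimpleGraph.Reachable.refl u), if_neg hb]; simp
  · intro x y hxy hF hne
    have hK' : K.Adj x y := by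
      simp [hK, hH, hF, hxy, hne]
    rw [map_add, Fintype.linearCombination_apply_single, Fintype.linearCombination_apply_single]
    have : K.Reachable u x ↔ K.Reachable u y :=
      ⟨fun h => h.trans hK'.reachable, fun h => h.trans hK'.symm.reachable⟩
    simp only [this]
    exact z2_add_self _

theorem rep_large {V : Type u} [Fintype V] [DecidableEq V] {G : SimpleGraph V} {t : ℕ}
    (F : Finset (Sym2 V)) (hF : (F : Set (Sym2 V)) ⊆ G.edgeSet)
    (hforest : (SimpleGraph.fromEdgeSet (F : Set (Sym2 V))).IsAcyclic)
    (hdel : (G.deleteEdges (F : Set (Sym2 V))).Colorable (2 ^ t))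
    {X : Type} [AddCommGroup X] [Module (ZMod 2) X] [Fintype X] (D : Set X) (h0 : (0 : X) ∉ D)
    (h : 2 ^ (F.card - 1) ≤ D.ncard) : MRep t (cycleMatroid G) D := by
  obtain ⟨d, hd, hdD⟩ := indep_of_card D h0 F (by rwa [Fintype.card_coe])
  obtain ⟨c, hc⟩ := col_vec hdel
  have hrep : ∀ e : F, ∃ u v, G.Adj u v ∧ (e : Sym2 V) = s(u, v) := by
    rintro ⟨e, he⟩
    induction e with
    | h u v => exact ⟨u, v, hF he, rfl⟩
  choose U W hUW heq using hrep
  have hg : ∀ e : F, ∃ g : (V → ZMod 2) →ₗ[ZMod 2] ZMod 2,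
      ∀ e' : F, g (Pi.single (U e') 1 + Pi.single (W e') 1) = if e = e' then 1 else 0 := by
    intro e
    obtain ⟨g, g1, g2⟩ := bridge_fun F hforest (U e) (W e) (hUW e).ne (heq e ▸ e.2)
    refine ⟨g, fun e' => ?_⟩
    split_ifs with hee
    · rw [← hee, g1]
    · refine g2 _ _ (hUW e').ne (heq e' ▸ e'.2) ?_
      rw [← heq, ← heq]
      exact fun h => hee (Subtype.ext h.symm)
  choose g hg using hg
  set vec : F → (V → ZMod 2) := fun e => Pi.single (U e) 1 + Pi.single (W e) 1 with hvec
  have hg' : ∀ e e', g e (vec e') = if e = e' then 1 else 0 := hg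
  set b := Fintype.linearCombination (ZMod 2) c with hb
  let a : (V → ZMod 2) →ₗ[ZMod 2] X := ∑ e : F, (g e).smulRight (d e)
  have ha : ∀ x, a x = ∑ e : F, g e x • d e := by
    intro x; simp [a]
  have key : ∀ e ∈ cycleMatroid G, b e = 0 → ∃ i : F, e = vec i := by
    rintro _ ⟨u, v, huv, rfl⟩ hbe
    rw [map_add, hb, Fintype.linearCombination_apply_single, Fintype.linearCombination_apply_single,
      one_smul, one_smul] at hbe
    have hin : s(u, v) ∈ F := by
      by_contra hn
      refine hc u v ?_ (z2_eq_of_add hbe)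
      rw [SimpleGraph.deleteEdges_adj]
      exact ⟨huv, hn⟩
    refine ⟨⟨_, hin⟩, ?_⟩
    have := heq ⟨_, hin⟩
    rcases Sym2.eq_iff.1 this with ⟨h1, h2⟩ | ⟨h1, h2⟩
    · rw [hvec]; simp only [← h1, ← h2]
    · rw [hvec]; simp only [← h1, ← h2]; exact add_comm _ _
  refine ⟨b, a, ?_, ?_⟩
  · intro x hx hax
    let q : (V → ZMod 2) →ₗ[ZMod 2] (V → ZMod 2) := ∑ e : F, (g e).smulRight (vec e)
    have hq : ∀ x, q x = ∑ e : F, g e x • vec e := by intro x; simp [q]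
    have hle : Submodule.span (ZMod 2) {e | e ∈ cycleMatroid G ∧ b e = 0} ≤
        LinearMap.eqLocus q LinearMap.id := by
      refine Submodule.span_le.2 fun e he => ?_
      obtain ⟨i, rfl⟩ := key e he.1 he.2
      show q (vec i) = vec i
      rw [hq]
      simp [hg']
    have h1 : q x = x := hle hx
    rw [ha] at hax
    have h2 := Fintype.linearIndependent_iff.1 hd _ hax
    rw [← h1, hq]
    simp [h2]
  · intro e he hbe
    obtain ⟨i, rfl⟩ := key e he hbe
    rw [ha]
    simp [hg', hdD i]

end rep
section fin
universe u

theorem ker_card {n t : ℕ} (p : Vec n →ₗ[ZMod 2] Vec t) (hp : Function.Surjective p) :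
    Nat.card (LinearMap.ker p) = 2 ^ (n - t) := by
  have h := LinearMap.finrank_range_add_finrank_ker p
  rw [LinearMap.range_eq_top.2 hp, finrank_top, Module.finrank_fin_fun, Module.finrank_fin_fun] at h
  rw [Module.natCard_eq_pow_finrank (K := ZMod 2), Nat.card_zmod]
  congr 1
  omega

theorem compl_card {n t : ℕ} (p : Vec n →ₗ[ZMod 2] Vec t) (hp : Function.Surjective p) :
    {v : Vec n | p v ≠ 0}.ncard = 2 ^ n - 2 ^ (n - t) := by
  have h : ((LinearMap.ker p : Submodule (ZMod 2) (Vec n)) : Set (Vec n)).ncard = 2 ^ (n - t) :=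
    ker_card p hp
  have h2 := Set.ncard_add_ncard_compl ((LinearMap.ker p : Submodule (ZMod 2) (Vec n)) : Set (Vec n))
  have h3 : ((LinearMap.ker p : Submodule (ZMod 2) (Vec n)) : Set (Vec n))ᶜ = {v : Vec n | p v ≠ 0} := by
    ext v; simp
  have h4 : Nat.card (Vec n) = 2 ^ n := by rw [Nat.card_eq_fintype_card, card_Vec]
  rw [h3, h, h4] at h2
  omega

theorem upper {V : Type u} [Fintype V] [DecidableEq V] {G : SimpleGraph V} {t : ℕ}
    (hc : G.Colorable (2 ^ (t + 1))) (ℓ : ℕ)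
    (hℓ : ∀ (k : ℕ) (D : Set (Vec k)), 0 ∉ D → ¬ MRep t (cycleMatroid G) D → D.ncard ≤ ℓ) :
    ∃ n₀, ∀ n ≥ n₀, ∀ M : Set (Vec n), 0 ∉ M → ¬ HasRestriction (cycleMatroid G) M →
      M.ncard ≤ 2 ^ n - 2 ^ (n - t) + ℓ := by
  set c := Fintype.card V with hcV
  obtain ⟨n₁, hst⟩ := stability t c (1 / 2 ^ (t + c + 1)) (by positivity)
  refine ⟨max n₁ (t + c + 2), fun n hn M h0 hfree => ?_⟩
  have hn1 : n₁ ≤ n := le_trans (le_max_left _ _) hn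
  have hn2 : t + c + 2 ≤ n := le_trans (le_max_right _ _) hn
  by_contra hcon
  push Not at hcon
  set M' := (Set.toFinite M).toFinset with hM'
  have hM'M : (M' : Set (Vec n)) = M := Set.Finite.coe_toFinset _
  have hmem : ∀ v, v ∈ M' ↔ v ∈ M := fun v => Set.Finite.mem_toFinset _
  have hcard : M'.card = M.ncard := by rw [← hM'M, Set.ncard_coe_finset]
  have hpow : 2 ^ (n - t) ≤ 2 ^ n := Nat.pow_le_pow_right (by norm_num) (by omega)
  obtain ⟨p, hp, hS⟩ := hst n hn1 M' (by
      rw [hcard]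
      have h1 : 2 ^ n ≤ M.ncard + 2 ^ (n - t) := by omega
      have h2 : (2 : ℝ) ^ n ≤ M.ncard + 2 ^ (n - t) := by exact_mod_cast h1
      have h3 : (1 / 2 : ℝ) ^ t * 2 ^ n = 2 ^ (n - t) := by
        have : n = (n - t) + t := by omega
        conv_lhs => rw [this, pow_add]
        rw [one_div, inv_pow]
        field_simp
      linarith)
    (fun hbb => hfree (hM'M ▸ bb_restr hc M' (by rwa [hmem]) hbb))
  set S := (Set.toFinite {v : Vec n | p v ≠ 0 ∧ v ∉ M'}).toFinset with hSd
  have hSc : S.card = {v : Vec n | p v ≠ 0 ∧ v ∉ M'}.ncard := by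
    rw [← Set.ncard_coe_finset, hSd, Set.Finite.coe_toFinset]
  rw [← hSc] at hS
  obtain ⟨q, rfl⟩ : ∃ q, n = q + 1 + (t + c + 1) := ⟨n - (t + c + 2), by omega⟩
  have hS2 : S.card ≤ 2 ^ (q + 1) := by
    have : (1 : ℝ) / 2 ^ (t + c + 1) * 2 ^ (q + 1 + (t + c + 1)) = 2 ^ (q + 1) := by
      rw [pow_add 2 (q + 1)]; field_simp
    rw [this] at hS
    exact_mod_cast hS
  have hnr : ¬ MRep t (cycleMatroid G) {v : Vec (q + 1 + (t + c + 1)) | v ∈ M' ∧ p v = 0} := by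
    intro hrep
    refine hfree (hM'M ▸ rep_restr (cycleMatroid G) p hp M' S ?_ ?_ hrep)
    · intro v h1 h2
      rw [hSd, Set.Finite.mem_toFinset]
      exact ⟨h1, h2⟩
    · rw [ker_card p hp]
      have e : q + 1 + (t + c + 1) - t = c + (q + 2) := by omega
      have e2 : Fintype.card (V → ZMod 2) = 2 ^ c := by simp [hcV]
      rw [e, e2, pow_add 2 c]
      refine Nat.mul_lt_mul_of_pos_left ?_ (by positivity)
      have : 1 ≤ 2 ^ q := Nat.one_le_two_pow
      have e3 : 2 ^ (q + 2) = 4 * 2 ^ q := by ring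
      have e4 : 2 ^ (q + 1) = 2 * 2 ^ q := by ring
      omega
  have hl := hℓ _ _ (fun h => h0 ((hmem _).1 h.1)) hnr
  have hsub : M ⊆ {v | p v ≠ 0} ∪ {v | v ∈ M' ∧ p v = 0} := by
    intro v hv
    by_cases h : p v = 0
    · exact Or.inr ⟨(hmem v).2 hv, h⟩
    · exact Or.inl h
  have h5 := Set.ncard_le_ncard hsub (Set.toFinite _)
  have h6 := Set.ncard_union_le {v : Vec (q + 1 + (t + c + 1)) | p v ≠ 0} {v | v ∈ M' ∧ p v = 0}
  rw [compl_card p hp] at h6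
  omega

theorem lower {V : Type u} [Fintype V] [DecidableEq V] {G : SimpleGraph V} {t k : ℕ}
    (D : Set (Vec k)) (h0 : 0 ∉ D) (hD : ¬ MRep t (cycleMatroid G) D) (n : ℕ) (hn : k + t ≤ n) :
    ∃ M : Set (Vec n), 0 ∉ M ∧ ¬ HasRestriction (cycleMatroid G) M ∧
      M.ncard = 2 ^ n - 2 ^ (n - t) + D.ncard := by
  obtain ⟨p, hp⟩ : ∃ p : Vec n →ₗ[ZMod 2] Vec t, Function.Surjective p := by
    refine ⟨LinearMap.funLeft _ _ (Fin.castLE (by omega : t ≤ n)), ?_⟩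
    exact LinearMap.funLeft_surjective_of_injective _ _ _ (Fin.castLE_injective _)
  have hk : Module.finrank (ZMod 2) (Vec k) ≤ Module.finrank (ZMod 2) (LinearMap.ker p) := by
    have h := LinearMap.finrank_range_add_finrank_ker p
    rw [LinearMap.range_eq_top.2 hp, finrank_top, Module.finrank_fin_fun, Module.finrank_fin_fun] at h
    rw [Module.finrank_fin_fun]
    omega
  rw [Module.finrank_fin_fun] at hk
  obtain ⟨ι', hι'⟩ : ∃ ι' : Vec k →ₗ[ZMod 2] LinearMap.ker p, Function.Injective ι' := by
    let B := Module.finBasis (ZMod 2) (LinearMap.ker p)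
    refine ⟨Fintype.linearCombination (ZMod 2) (fun i => B (Fin.castLE hk i)), ?_⟩
    exact LinearIndependent.fintypeLinearCombination_injective
      (B.linearIndependent.comp _ (Fin.castLE_injective hk))
  set ι : Vec k →ₗ[ZMod 2] Vec n := (LinearMap.ker p).subtype ∘ₗ ι' with hι
  have hinj : Function.Injective ι := Subtype.val_injective.comp hι'
  have hpι : ∀ x, p (ι x) = 0 := fun x => (ι' x).2
  obtain ⟨π, hπ⟩ := LinearMap.exists_leftInverse_of_injective ι (LinearMap.ker_eq_bot.2 hinj)
  have hπ' : ∀ x, π (ι x) = x := fun x => LinearMap.congr_fun hπ x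
  refine ⟨{v | p v ≠ 0} ∪ ι '' D, ?_, ?_, ?_⟩
  · rintro (h | ⟨x, hx, hx0⟩)
    · exact h (map_zero p)
    · rw [← map_zero ι] at hx0
      exact h0 (hinj hx0 ▸ hx)
  · rintro ⟨ψ, hψ, hsub⟩
    have key : ∀ e ∈ cycleMatroid G, p (ψ e) = 0 → ψ e ∈ ι '' D := by
      intro e he h
      rcases hsub ⟨e, he, rfl⟩ with h' | h'
      · exact absurd h h'
      · exact h'
    refine hD ⟨p ∘ₗ ψ, π ∘ₗ ψ, ?_, ?_⟩
    · intro x hx hax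
      have hle : Submodule.span (ZMod 2) {e | e ∈ cycleMatroid G ∧ (p ∘ₗ ψ) e = 0} ≤
          LinearMap.eqLocus (ι ∘ₗ π ∘ₗ ψ) ψ := by
        refine Submodule.span_le.2 fun e he => ?_
        obtain ⟨y, hy, hye⟩ := key e he.1 he.2
        show ι (π (ψ e)) = ψ e
        rw [← hye, hπ']
      have h1 : ι (π (ψ x)) = ψ x := hle hx
      have h2 : π (ψ x) = 0 := hax
      rw [h2, map_zero] at h1
      exact hψ (by rw [← h1, map_zero])
    · intro e he h
      obtain ⟨y, hy, hye⟩ := key e he h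
      show π (ψ e) ∈ D
      rw [← hye, hπ']
      exact hy
  · rw [Set.ncard_union_eq _ (Set.toFinite _) (Set.toFinite _), compl_card p hp,
      Set.ncard_image_of_injective _ hinj]
    rw [Set.disjoint_left]
    rintro _ h ⟨x, _, rfl⟩
    exact h (hpι x)

theorem graphic_aux {V : Type u} [Fintype V] [DecidableEq V] (G : SimpleGraph V) (t : ℕ)
    (ht1 : ¬ G.Colorable (2 ^ t)) (ht2 : G.Colorable (2 ^ (t + 1)))
    (F : Finset (Sym2 V)) (hF : (F : Set (Sym2 V)) ⊆ G.edgeSet)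
    (hforest : (SimpleGraph.fromEdgeSet (F : Set (Sym2 V))).IsAcyclic)
    (hdel : (G.deleteEdges (F : Set (Sym2 V))).Colorable (2 ^ t)) :
    ∃ ℓ : ℕ, ℓ < 2 ^ (F.card - 1) ∧ ∃ n₀ : ℕ, ∀ n ≥ n₀,
      exNum (cycleMatroid G) n = 2 ^ n - 2 ^ (n - t) + ℓ := by
  set A : Set ℕ := {s | ∃ (k : ℕ) (D : Set (Vec k)), 0 ∉ D ∧ ¬ MRep t (cycleMatroid G) D ∧ D.ncard = s}
    with hA
  have hAlt : ∀ s ∈ A, s < 2 ^ (F.card - 1) := by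
    rintro s ⟨k, D, h0, hD, rfl⟩
    by_contra h
    push Not at h
    exact hD (rep_large F hF hforest hdel D h0 h)
  have hAne : A.Nonempty := ⟨0, 0, ∅, by simp, fun h => ht1 (rep_empty h), by simp⟩
  have hAbdd : BddAbove A := ⟨_, fun s hs => (hAlt s hs).le⟩
  have hmem := Nat.sSup_mem hAne hAbdd
  refine ⟨sSup A, hAlt _ hmem, ?_⟩
  obtain ⟨n₁, hup⟩ := upper ht2 (sSup A) (fun k D h0 hD => le_csSup hAbdd ⟨k, D, h0, hD, rfl⟩)
  obtain ⟨k, D, h0, hD, hcard⟩ := hmem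
  refine ⟨max n₁ (k + t), fun n hn => ?_⟩
  obtain ⟨M, hM0, hM1, hM2⟩ := lower D h0 hD n (le_trans (le_max_right _ _) hn)
  rw [hcard] at hM2
  unfold exNum
  have hub : ∀ m ∈ {m | ∃ M : Set (Fin n → ZMod 2), 0 ∉ M ∧ ¬ HasRestriction (cycleMatroid G) M ∧
      M.ncard = m}, m ≤ 2 ^ n - 2 ^ (n - t) + sSup A := by
    rintro m ⟨M', h1, h2, rfl⟩
    exact hup n (le_trans (le_max_left _ _) hn) M' h1 h2
  refine le_antisymm (csSup_le ⟨_, M, hM0, hM1, hM2⟩ hub) (le_csSup ⟨_, hub⟩ ⟨M, hM0, hM1, hM2⟩)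

end fin

/-- Exact Turán numbers for cycle matroids of graphs admitting a forest whose
deletion drops the chromatic number to at most `2^t`. -/
theorem graphic_exact {V : Type*} [Fintype V] [DecidableEq V] (G : SimpleGraph V)
    (hχ2 : 2 ≤ G.chromaticNumber) (t : ℕ)
    (ht1 : ((2 ^ t : ℕ) : ℕ∞) < G.chromaticNumber)
    (ht2 : G.chromaticNumber ≤ ((2 ^ (t + 1) : ℕ) : ℕ∞))
    (F : Finset (Sym2 V)) (hF : (F : Set (Sym2 V)) ⊆ G.edgeSet)
    (hforest : (SimpleGraph.fromEdgeSet (F : Set (Sym2 V))).IsAcyclic)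
    (hdel : (G.deleteEdges (F : Set (Sym2 V))).chromaticNumber ≤ ((2 ^ t : ℕ) : ℕ∞)) :
    ∃ ℓ : ℕ, ℓ < 2 ^ (F.card - 1) ∧ ∃ n₀ : ℕ, ∀ n ≥ n₀,
      exNum (cycleMatroid G) n = 2 ^ n - 2 ^ (n - t) + ℓ := by
  exact graphic_aux G t
    (fun h => absurd ht1 (not_lt.2 (SimpleGraph.chromaticNumber_le_iff_colorable.2 h)))
    (SimpleGraph.chromaticNumber_le_iff_colorable.1 ht2) F hF hforest
    (SimpleGraph.chromaticNumber_le_iff_colorable.1 hdel)
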